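/- arXiv:0806.1188 — 5 statements merged into one kernel-verified Lean document; each statement's English description precedes it below -/
import Mathlib

section
/- Let k > r ≥ 2 be integers and let Γ be a k-free group. Let P ≤ Γ be a finitely generated subgroup of rank at most r, let R ≤ P be a subgroup of rank exactly r, and let C ≤ Γ be an infinite cyclic subgroup such that the subgroup ⟨R ∪ C⟩ generated by R and C has rank exactly r. Then the subgroup ⟨P ∪ C⟩ generated by P and C has rank at most r. -/
/-- The rank of a subgroup: the minimal cardinality of a finite generating set,
or `⊤` if the subgroup is not finitely generated. -/
noncomputable def Subgroup.rk {Γ : Type*} [Group Γ] (H : Subgroup Γ) : ℕ∞ :=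
  sInf {n : ℕ∞ | ∃ S : Finset Γ, (S.card : ℕ∞) = n ∧ Subgroup.closure (S : Set Γ) = H}

/-- A group is `k`-free if every finitely generated subgroup of rank at most `k` is free. -/
def IsKFree (k : ℕ) (Γ : Type*) [Group Γ] : Prop :=
  ∀ H : Subgroup Γ, H.rk ≤ (k : ℕ∞) → IsFreeGroup H

/-- A partial translation on a finite set extends to a permutation. -/
theorem exists_perm_extending {G : Type*} [Group G] (T : Finset G) (a : G) :
    ∃ σ : Equiv.Perm T, ∀ s : T, a * s.1 ∈ T → (σ s).1 = a * s.1 := by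
  classical
  let e : {s : T // a * s.1 ∈ T} ≃ {s : T // a⁻¹ * s.1 ∈ T} :=
    { toFun := fun s => ⟨⟨a * s.1.1, s.2⟩, by simp⟩
      invFun := fun s => ⟨⟨a⁻¹ * s.1.1, s.2⟩, by simp⟩
      left_inv := fun s => by simp
      right_inv := fun s => by simp }
  refine ⟨e.extendSubtype, fun s hs => ?_⟩
  rw [Equiv.extendSubtype_apply_of_mem e s hs]
  rfl

/-- Free groups are residually finite. -/
theorem freeGroup_resid {α : Type*} (w : FreeGroup α) (hw : w ≠ 1) :
    ∃ (T : Finset (FreeGroup α)) (f : FreeGroup α →* Equiv.Perm T), f w ≠ 1 := by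
  classical
  let L := w.toWord
  let T : Finset (FreeGroup α) := (L.tails.map FreeGroup.mk).toFinset
  have hT : ∀ l, l <:+ L → FreeGroup.mk l ∈ T := by
    intro l hl
    simp only [T, List.mem_toFinset, List.mem_map, List.mem_tails]
    exact ⟨l, hl, rfl⟩
  choose σ hσ using fun a : α => exists_perm_extending T (FreeGroup.of a)
  let f := FreeGroup.lift σ
  have h1 : (1 : FreeGroup α) ∈ T := by
    have := hT [] List.nil_suffix
    simpa [FreeGroup.one_eq_mk] using this
  have key : ∀ l, l <:+ L → (f (FreeGroup.mk l) ⟨1, h1⟩).1 = FreeGroup.mk l := by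
    intro l
    induction l with
    | nil => intro _; simp [← FreeGroup.one_eq_mk]
    | cons x l ih =>
      intro hl
      have hl' : l <:+ L := (List.suffix_cons x l).trans hl
      have ih := ih hl'
      have hmem := hT _ hl
      obtain ⟨a, b⟩ := x
      have hsplit : FreeGroup.mk ((a, b) :: l) = FreeGroup.mk [(a, b)] * FreeGroup.mk l := by
        simp [FreeGroup.mul_mk]
      rw [hsplit] at hmem ⊢
      rw [map_mul, Equiv.Perm.mul_apply]
      set t := f (FreeGroup.mk l) ⟨1, h1⟩ with ht
      cases b with
      | true =>
        change FreeGroup.of a * _ ∈ T at hmem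
        change (f (FreeGroup.of a) t).1 = FreeGroup.of a * _
        rw [← ih] at hmem ⊢
        simp only [f, FreeGroup.lift_apply_of]
        exact hσ a t hmem
      | false =>
        have hinv : FreeGroup.mk [(a, false)] = (FreeGroup.of a)⁻¹ := by
          simp [FreeGroup.of, FreeGroup.inv_mk, FreeGroup.invRev]
        rw [hinv] at hmem ⊢
        rw [← ih] at hmem ⊢
        simp only [f, map_inv, FreeGroup.lift_apply_of]
        have h2 : σ a ⟨(FreeGroup.of a)⁻¹ * t.1, hmem⟩ = t := by
          apply Subtype.ext
          rw [hσ]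
          · simp
          · simp
        have h3 : (σ a)⁻¹ t = ⟨(FreeGroup.of a)⁻¹ * t.1, hmem⟩ := by
          rw [Equiv.Perm.inv_eq_iff_eq, h2]
        rw [h3]
  refine ⟨T, f, fun hf => hw ?_⟩
  have := key L (List.suffix_refl L)
  simp only [L, FreeGroup.mk_toWord] at this
  rw [hf] at this
  simpa using this.symm

/-- Restriction of homomorphisms to a generating set. -/
def restr {Γ : Type*} [Group Γ] (H : Subgroup Γ) (S : Finset Γ) (hS : (S : Set Γ) ⊆ H)
    (G : Type*) [Group G] (f : H →* G) : S → G := fun s => f ⟨s.1, hS s.2⟩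

theorem restr_injective {Γ : Type*} [Group Γ] (H : Subgroup Γ) (S : Finset Γ)
    (hS : (S : Set Γ) ⊆ H) (hcl : Subgroup.closure (S : Set Γ) = H)
    (G : Type*) [Group G] : Function.Injective (restr H S hS G) := by
  intro f g hfg
  subst hcl
  apply MonoidHom.ext
  rintro ⟨x, hx⟩
  induction hx using Subgroup.closure_induction with
  | mem x hx => exact congrFun hfg ⟨x, hx⟩
  | one => exact (map_one f).trans (map_one g).symm
  | mul x y hx hy h1 h2 =>
    have := congrArg₂ (· * ·) h1 h2
    simp only [← map_mul] at this
    exact this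
  | inv x hx h1 =>
    have := congrArg (·⁻¹) h1
    simp only [← map_inv] at this
    exact this

theorem basis_card_le {Γ X : Type*} [Group Γ] (H : Subgroup Γ) (b : FreeGroupBasis X H)
    (S : Finset Γ) (hcl : Subgroup.closure (S : Set Γ) = H) :
    Finite X ∧ Nat.card X ≤ S.card := by
  classical
  have hS : (S : Set Γ) ⊆ H := hcl ▸ Subgroup.subset_closure
  let A := Multiplicative (ZMod 2)
  have hA : Nat.card A = 2 := by simp [A]
  have hinj : Function.Injective (fun φ : X → A => restr H S hS A (b.lift φ)) :=
    (restr_injective H S hS hcl A).comp b.lift.injective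
  have hfin : Finite A := Nat.finite_of_card_ne_zero (by omega)
  have : Finite (X → A) := Finite.of_injective _ hinj
  have hX : Finite X := by
    have : Nontrivial A := Finite.one_lt_card_iff_nontrivial.1 (by omega)
    obtain ⟨u, v, huv⟩ := exists_pair_ne A
    refine Finite.of_injective (fun x : X => fun y => if y = x then u else v) ?_
    intro x y hxy
    by_contra hne
    have := congrFun hxy x
    simp [hne] at this
    exact huv this
  refine ⟨hX, ?_⟩
  have := Nat.card_le_card_of_injective _ hinj
  rw [Nat.card_fun, Nat.card_fun, hA] at this
  have := (Nat.pow_le_pow_iff_right (by norm_num)).1 this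
  simpa using this

theorem rk_le_of_closure {Γ : Type*} [Group Γ] (H : Subgroup Γ) (S : Finset Γ)
    (hcl : Subgroup.closure (S : Set Γ) = H) : H.rk ≤ S.card :=
  sInf_le ⟨S, rfl, hcl⟩

theorem exists_of_rk_le {Γ : Type*} [Group Γ] (H : Subgroup Γ) (n : ℕ) (h : H.rk ≤ n) :
    ∃ S : Finset Γ, S.card ≤ n ∧ Subgroup.closure (S : Set Γ) = H := by
  have hne : {n : ℕ∞ | ∃ S : Finset Γ, (S.card : ℕ∞) = n ∧
      Subgroup.closure (S : Set Γ) = H}.Nonempty := by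
    by_contra hcon
    rw [Set.not_nonempty_iff_eq_empty] at hcon
    rw [Subgroup.rk, hcon, sInf_empty] at h
    simp at h
  obtain ⟨S, h1, h2⟩ := csInf_mem hne
  refine ⟨S, ?_, h2⟩
  have : (S.card : ℕ∞) ≤ n := h1.trans_le h
  exact_mod_cast this

theorem closure_basis {Γ X : Type*} [Group Γ] (H : Subgroup Γ) (b : FreeGroupBasis X H) :
    Subgroup.closure (Set.range fun x => (b x : Γ)) = H := by
  have h := FreeGroup.closure_range_of X
  have h2 := congrArg (Subgroup.map (H.subtype.comp b.repr.symm.toMonoidHom)) h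
  rw [MonoidHom.map_closure, ← MonoidHom.range_eq_map, ← Set.range_comp,
    MonoidHom.range_comp, MonoidHom.range_eq_top_of_surjective _ b.repr.symm.surjective,
    ← MonoidHom.range_eq_map, Subgroup.range_subtype] at h2
  exact h2

theorem rk_le_basis {Γ X : Type*} [Group Γ] (H : Subgroup Γ) (b : FreeGroupBasis X H)
    [Finite X] : H.rk ≤ (Nat.card X : ℕ∞) := by
  classical
  have := Fintype.ofFinite X
  refine (rk_le_of_closure H (Finset.univ.image fun x => (b x : Γ)) ?_).trans ?_
  · simpa using closure_basis H b
  · rw [Nat.card_eq_fintype_card]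
    exact_mod_cast Finset.card_image_le

/-- Hopfian property. -/
theorem lift_injective_of_card {Γ X : Type*} [Group Γ] (H : Subgroup Γ)
    (b : FreeGroupBasis X H) (S : Finset Γ) (hcl : Subgroup.closure (S : Set Γ) = H)
    (hcard : S.card ≤ Nat.card X) :
    Function.Injective (FreeGroup.lift (fun s : S => (s : Γ))) := by
  have hS : (S : Set Γ) ⊆ H := hcl ▸ Subgroup.subset_closure
  obtain ⟨hX, hle⟩ := basis_card_le H b S hcl
  rw [injective_iff_map_eq_one]
  intro w hw
  by_contra hne
  obtain ⟨T, f, hf⟩ := freeGroup_resid w hne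
  let G := Equiv.Perm T
  have hinj : Function.Injective (fun φ : X → G => restr H S hS G (b.lift φ)) :=
    (restr_injective H S hS hcl G).comp b.lift.injective
  have hbij := (Nat.bijective_iff_injective_and_card
    (fun φ : X → G => restr H S hS G (b.lift φ))).2 ⟨hinj, by
      rw [Nat.card_fun, Nat.card_fun]
      congr 1
      simp
      omega⟩
  obtain ⟨φ, hφ⟩ := hbij.2 (fun s => f (FreeGroup.of s))
  let g : FreeGroup S →* H := FreeGroup.lift (fun s : S => (⟨s.1, hS s.2⟩ : H))
  have h1 : (b.lift φ).comp g = f := by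
    ext1 s
    simp only [MonoidHom.comp_apply, g, FreeGroup.lift_apply_of]
    exact congrFun hφ s
  have h2 : H.subtype.comp g = FreeGroup.lift (fun s : S => (s : Γ)) := by
    ext1 s
    simp [g]
  have h3 : g w = 1 := by
    apply H.subtype_injective
    rw [map_one, ← hw, ← h2]
    rfl
  apply hf
  rw [← h1, MonoidHom.comp_apply, h3, map_one]

section CoprodMap
open Monoid

theorem neWord_map {ι : Type*} {M N : ι → Type*} [∀ i, Group (M i)] [∀ i, Group (N i)]
    (f : ∀ i, M i →* N i) (hf : ∀ i, Function.Injective (f i)) {i j : ι}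
    (w : CoprodI.NeWord M i j) : ∃ w' : CoprodI.NeWord N i j,
      w'.prod = CoprodI.lift (fun i => (CoprodI.of (i := i)).comp (f i)) w.prod := by
  induction w with
  | singleton x hx =>
    refine ⟨.singleton (f _ x) (fun h => hx (hf _ (h.trans (map_one _).symm))), ?_⟩
    simp
  | append w₁ hne w₂ ih1 ih2 =>
    obtain ⟨v₁, h₁⟩ := ih1
    obtain ⟨v₂, h₂⟩ := ih2
    exact ⟨.append v₁ hne v₂, by simp [h₁, h₂]⟩

theorem coprodI_map_injective {ι : Type*} {M N : ι → Type*} [∀ i, Group (M i)]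
    [∀ i, Group (N i)] (f : ∀ i, M i →* N i) (hf : ∀ i, Function.Injective (f i)) :
    Function.Injective (CoprodI.lift (fun i => (CoprodI.of (i := i)).comp (f i)) :
      CoprodI M →* CoprodI N) := by
  classical
  rw [injective_iff_map_eq_one]
  intro x hx
  by_contra hne
  obtain ⟨i, j, w, hw⟩ := CoprodI.NeWord.of_word (CoprodI.Word.equiv x) (by
    intro h
    apply hne
    have := CoprodI.Word.equiv.symm_apply_apply x
    rw [h] at this
    exact this.symm)
  have hwx : w.prod = x := by
    rw [CoprodI.NeWord.prod, hw]
    exact CoprodI.Word.equiv.symm_apply_apply x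
  obtain ⟨w', hw'⟩ := neWord_map f hf w
  rw [hwx, hx] at hw'
  have h1 : w'.toWord = CoprodI.Word.empty := by
    apply CoprodI.Word.equiv.symm.injective
    exact hw'
  have h2 := congrArg CoprodI.Word.toList h1
  exact w'.toList_ne_nil h2

theorem coprodI_injective_of_free {Γ ι : Type*} [Group Γ] (X : ι → Set Γ)
    (h : Function.Injective (FreeGroup.lift (fun x : Σ i, X i => (x.2 : Γ))))
    (G : ι → Subgroup Γ) (hG : ∀ i, Subgroup.closure (X i) = G i) :
    Function.Injective (CoprodI.lift (fun i => (G i).subtype) :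
      CoprodI (fun i => G i) →* Γ) := by
  have hX : ∀ i, X i ⊆ G i := fun i => hG i ▸ Subgroup.subset_closure
  let g : FreeGroup (Σ i, X i) →* CoprodI (fun i => G i) :=
    FreeGroup.lift (fun x => CoprodI.of (i := x.1) (⟨x.2.1, hX _ x.2.2⟩ : G x.1))
  have hcomp : (CoprodI.lift (fun i => (G i).subtype)).comp g =
      FreeGroup.lift (fun x : Σ i, X i => (x.2 : Γ)) := by
    ext1 x
    simp [g]
  have hof : ∀ i (m : G i), (CoprodI.of (M := fun i => G i) m) ∈ g.range := by
    rintro i ⟨m, hm⟩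
    have hm' := hm
    rw [← hG i] at hm'
    induction hm' using Subgroup.closure_induction with
    | mem x hx => exact ⟨FreeGroup.of ⟨i, ⟨x, hx⟩⟩, by simp [g]⟩
    | one =>
      have : CoprodI.of (M := fun i => G i) (⟨1, hm⟩ : G i) = 1 := map_one CoprodI.of
      rw [this]; exact one_mem _
    | mul x y hx hy h1 h2 =>
      have h1 := h1 (hG i ▸ hx)
      have h2 := h2 (hG i ▸ hy)
      have := mul_mem h1 h2
      rw [← map_mul] at this
      exact this
    | inv x hx h1 =>
      have h1 := h1 (hG i ▸ hx)
      have := inv_mem h1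
      rw [← map_inv] at this
      exact this
  have hsurj : Function.Surjective g := by
    intro x
    change x ∈ g.range
    induction x using CoprodI.induction_on with
    | one => exact one_mem _
    | of i m => exact hof i m
    | mul x y hx hy => exact mul_mem hx hy
  rw [← hcomp, MonoidHom.coe_comp] at h
  exact (Function.Injective.of_comp_iff' _ ⟨h.of_comp, hsurj⟩).1 h

end CoprodMap

/-- Let `k > r ≥ 2`, let `Γ` be `k`-free, let `P ≤ Γ` be finitely generated of rank at most
`r`, let `R ≤ P` have rank exactly `r`, and let `C` be an infinite cyclic subgroup with
`⟨R ∪ C⟩` of rank exactly `r`. Then `⟨P ∪ C⟩` has rank at most `r`. -/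
theorem stmt1 {Γ : Type*} [Group Γ] (k r : ℕ) (hr : 2 ≤ r) (hrk : r < k)
    (hfree : IsKFree k Γ) (P R C : Subgroup Γ)
    (hP : P.rk ≤ (r : ℕ∞)) (hRP : R ≤ P) (hR : R.rk = (r : ℕ∞))
    (hCcyc : ∃ g : Γ, C = Subgroup.zpowers g) (hCinf : Infinite C)
    (hRC : (R ⊔ C).rk = (r : ℕ∞)) :
    (P ⊔ C).rk ≤ (r : ℕ∞) := by
  classical
  by_contra hcon
  obtain ⟨c, hc⟩ := hCcyc
  obtain ⟨S, hSc, hS⟩ := exists_of_rk_le P r hP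
  have hCcl : Subgroup.closure ({c} : Set Γ) = C := by
    rw [hc, Subgroup.zpowers_eq_closure]
  have hT : Subgroup.closure ((insert c S : Finset Γ) : Set Γ) = P ⊔ C := by
    rw [Finset.coe_insert, Set.insert_eq, Subgroup.closure_union, hS, hCcl, sup_comm]
  have hTc := rk_le_of_closure _ _ hT
  have hci := Finset.card_insert_le c S
  have hTr : r < (insert c S).card := by
    by_contra hle
    exact hcon (hTc.trans (by exact_mod_cast not_lt.1 hle))
  have hcS : c ∉ S := by
    intro h
    rw [Finset.insert_eq_of_mem h] at hTr
    omega
  have hQ : IsFreeGroup ↥(P ⊔ C) := hfree _ (hTc.trans (by exact_mod_cast (by omega)))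
  let b := IsFreeGroup.basis ↥(P ⊔ C)
  obtain ⟨hXfin, -⟩ := basis_card_le _ b _ hT
  have hbr := rk_le_basis _ b
  have hinj := lift_injective_of_card _ b _ hT (by
    by_contra hlt
    exact hcon (hbr.trans (by exact_mod_cast (by omega))))
  -- pass to the free product
  let X : Bool → Set Γ := fun i => cond i (S : Set Γ) {c}
  let G : Bool → Subgroup Γ := fun i => cond i P C
  let K : Bool → Subgroup Γ := fun i => cond i R C
  have hXG : ∀ i, Subgroup.closure (X i) = G i := by
    rintro (_ | _)
    · exact hCcl
    · exact hS
  have hXT : ∀ i, X i ⊆ ((insert c S : Finset Γ) : Set Γ) := by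
    rintro (_ | _) <;> simp [X]
  let j : (Σ i, X i) → (insert c S : Finset Γ) := fun x => ⟨x.2.1, hXT _ x.2.2⟩
  have hj : Function.Injective j := by
    rintro ⟨i, x, hx⟩ ⟨i', y, hy⟩ hxy
    have hxy : x = y := congrArg Subtype.val hxy
    subst hxy
    cases i <;> cases i'
    · rfl
    · exact absurd hy (by rw [show x = c from hx]; exact hcS)
    · exact absurd hx (by rw [show x = c from hy]; exact hcS)
    · rfl
  have hXinj : Function.Injective (FreeGroup.lift (fun x : Σ i, X i => (x.2 : Γ))) := by
    have : FreeGroup.lift (fun x : Σ i, X i => (x.2 : Γ)) =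
        (FreeGroup.lift (fun s : (insert c S : Finset Γ) => (s : Γ))).comp (FreeGroup.map j) := by
      ext1 x
      simp [j]
    rw [this, MonoidHom.coe_comp]
    exact hinj.comp (FreeGroup.map_injective hj)
  have hGinj := coprodI_injective_of_free X hXinj G hXG
  have hKG : ∀ i, K i ≤ G i := by
    rintro (_ | _)
    · exact le_rfl
    · exact hRP
  have hmap := coprodI_map_injective (fun i => Subgroup.inclusion (hKG i))
    (fun i => Subgroup.inclusion_injective (hKG i))
  let φ : Monoid.CoprodI (fun i => K i) →* Γ := Monoid.CoprodI.lift (fun i => (K i).subtype)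
  have hφ : Function.Injective φ := by
    have : φ = (Monoid.CoprodI.lift (fun i => (G i).subtype)).comp
        (Monoid.CoprodI.lift (fun i => (Monoid.CoprodI.of (i := i)).comp
          (Subgroup.inclusion (hKG i)))) := by
      apply Monoid.CoprodI.ext_hom
      intro i
      ext x
      simp [φ]
    rw [this, MonoidHom.coe_comp]
    exact hGinj.comp hmap
  have hrange : φ.range = R ⊔ C := by
    rw [Monoid.CoprodI.range_eq_iSup, iSup_bool_eq]
    simp [K]
  have hRf : IsFreeGroup R := hfree R (hR.trans_le (by exact_mod_cast hrk.le))
  have hCf : IsFreeGroup C := hfree C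
    ((rk_le_of_closure C {c} (by simpa using hCcl)).trans (by
      rw [Finset.card_singleton]; exact_mod_cast (by omega)))
  have hKf : ∀ i, IsFreeGroup (K i) := by
    rintro (_ | _)
    · exact hCf
    · exact hRf
  let bK := fun i => IsFreeGroup.basis (K i)
  let B := ((Monoid.CoprodI.FreeGroupBasis.coprodI bK).map (MonoidHom.ofInjective hφ)).map
    (MulEquiv.subgroupCongr hrange)
  obtain ⟨U, hUc, hU⟩ := exists_of_rk_le _ r hRC.le
  obtain ⟨hBfin, hBle⟩ := basis_card_le _ B U hU
  have hfi : ∀ i, Finite (IsFreeGroup.Generators (K i)) := fun i =>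
    Finite.of_injective (fun x => (⟨i, x⟩ : Σ i, IsFreeGroup.Generators (K i)))
      (fun x y h => by simpa using h)
  have h1 : r ≤ Nat.card (IsFreeGroup.Generators (K true)) := by
    have h := rk_le_basis (K true) (bK true)
    have h' : (r : ℕ∞) ≤ _ := hR.symm.le.trans h
    exact_mod_cast h'
  have h2 : 0 < Nat.card (IsFreeGroup.Generators (K false)) := by
    rw [Nat.pos_iff_ne_zero]
    intro h0
    rw [Finite.card_eq_zero_iff] at h0
    have : C = ⊥ := by
      have := closure_basis (K false) (bK false)
      rw [Set.range_eq_empty, Subgroup.closure_empty] at this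
      exact this.symm
    rw [this] at hCinf
    exact not_finite (⊥ : Subgroup Γ)
  have h3 : Nat.card (Σ i, IsFreeGroup.Generators (K i)) =
      Nat.card (IsFreeGroup.Generators (K true)) +
      Nat.card (IsFreeGroup.Generators (K false)) := by
    rw [Nat.card_sigma, Fintype.sum_bool]
  omega
end

section
/- Let Γ be a 4-free group, and let P and Q be subgroups of Γ, each of rank exactly 2, such that the intersection P ∩ Q contains a subgroup of rank 2. Then the subgroup ⟨P ∪ Q⟩ generated by P and Q has rank exactly 2. -/
noncomputable section FourFree
namespace FourFree
open PowerSeries MvPolynomial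
open scoped TensorProduct

/-- Free associative algebra. -/
abbrev A (ι : Type*) := MonoidAlgebra ℚ (FreeMonoid ι)

/-- the generator `X i` of the free algebra -/
def ax {ι : Type*} (i : ι) : A ι := MonoidAlgebra.of ℚ (FreeMonoid ι) (FreeMonoid.of i)

/-- The exponential series `exp (t x)`. -/
def E {S : Type*} [Ring S] [Algebra ℚ S] (x : S) : PowerSeries S :=
  PowerSeries.mk fun n => ((n.factorial : ℚ)⁻¹) • x ^ n

section E
variable {S T : Type*} [Ring S] [Algebra ℚ S] [Ring T] [Algebra ℚ T]

lemma coeff_E (x : S) (n : ℕ) : PowerSeries.coeff n (E x) = ((n.factorial : ℚ)⁻¹) • x ^ n := by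
  simp [E]

lemma E_add {x y : S} (h : Commute x y) : E (x + y) = E x * E y := by
  ext n
  rw [PowerSeries.coeff_mul, coeff_E, h.add_pow', Finset.smul_sum]
  refine Finset.sum_congr rfl fun p hp => ?_
  rw [coeff_E, coeff_E, smul_mul_smul_comm, ← Nat.cast_smul_eq_nsmul ℚ, smul_smul]
  congr 1
  rw [Finset.HasAntidiagonal.mem_antidiagonal] at hp
  subst hp
  rw [Nat.cast_add_choose]
  have h1 : ((p.1.factorial : ℕ) : ℚ) ≠ 0 := by positivity
  have h2 : ((p.2.factorial : ℕ) : ℚ) ≠ 0 := by positivity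
  have h3 : (((p.1 + p.2).factorial : ℕ) : ℚ) ≠ 0 := by positivity
  field_simp

lemma E_zero : E (0 : S) = 1 := by
  ext n
  rw [coeff_E, PowerSeries.coeff_one]
  split_ifs with h
  · simp [h]
  · simp [h]

lemma map_E (f : S →ₐ[ℚ] T) (x : S) : PowerSeries.map (f : S →+* T) (E x) = E (f x) := by
  ext n
  simp [coeff_E]

/-- `exp (t x)` as a unit. -/
def EU (x : S) : (PowerSeries S)ˣ where
  val := E x
  inv := E (-x)
  val_inv := by rw [← E_add (Commute.neg_right (Commute.refl x)), add_neg_cancel, E_zero]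
  inv_val := by rw [← E_add (Commute.neg_left (Commute.refl x)), neg_add_cancel, E_zero]

end E

variable {ι : Type*}

/-- Magnus-type representation (unit valued). -/
def phiU : FreeGroup ι →* (PowerSeries (A ι))ˣ := FreeGroup.lift fun i => EU (ax i)

/-- Magnus-type representation. -/
def phi : FreeGroup ι →* PowerSeries (A ι) := (Units.coeHom _).comp phiU

@[simp] lemma phi_of (i : ι) : phi (FreeGroup.of i) = E (ax i) := by
  simp [phi, phiU, EU]

@[simp] lemma phi_of_inv (i : ι) : phi (FreeGroup.of i)⁻¹ = E (-ax i) := by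
  simp [phi, phiU]; rfl

lemma phi_const (g : FreeGroup ι) : PowerSeries.coeff 0 (phi g) = 1 := by
  induction g using FreeGroup.induction_on with
  | C1 => simp
  | of i => simp [coeff_E]
  | inv_of i _ => 
    rw [phi_of_inv]; simp [coeff_E]
  | mul x y hx hy => 
    rw [map_mul, PowerSeries.coeff_mul]; simp [hx, hy]

/-- scaling endomorphism `X i ↦ 2 X i` -/
def scal : A ι →ₐ[ℚ] A ι :=
  MonoidAlgebra.lift ℚ _ _ (FreeMonoid.lift fun i => (2 : ℚ) • ax i)

@[simp] lemma scal_ax (i : ι) : scal (ax i) = (2 : ℚ) • ax i := by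
  simp [scal, ax]

lemma scal_phi (g : FreeGroup ι) : ∀ n, scal (PowerSeries.coeff n (phi g)) = (2 : ℚ) ^ n • PowerSeries.coeff n (phi g) := by
  induction g using FreeGroup.induction_on with
  | C1 => 
    intro n
    rw [map_one, PowerSeries.coeff_one]; split_ifs with h <;> simp [h]
  | of i => 
    intro n
    rw [phi_of, coeff_E, map_smul, map_pow, scal_ax, smul_pow, smul_comm]
  | inv_of i _ => 
    intro n
    rw [phi_of_inv, coeff_E, map_smul, map_pow, map_neg, scal_ax, ← smul_neg, smul_pow, smul_comm]
  | mul x y hx hy => 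
    intro n
    rw [map_mul, PowerSeries.coeff_mul, map_sum, Finset.smul_sum]
    refine Finset.sum_congr rfl fun p hp => ?_
    rw [Finset.HasAntidiagonal.mem_antidiagonal] at hp
    rw [map_mul, hx, hy, smul_mul_smul_comm, ← pow_add, hp]

/-- coproduct -/
def cop : A ι →ₐ[ℚ] (A ι ⊗[ℚ] A ι) :=
  MonoidAlgebra.lift ℚ _ _ (FreeMonoid.lift fun i => (ax i) ⊗ₜ[ℚ] (1 : A ι) + (1 : A ι) ⊗ₜ[ℚ] ax i)

@[simp] lemma cop_ax (i : ι) : cop (ax i) = (ax i) ⊗ₜ[ℚ] (1 : A ι) + (1 : A ι) ⊗ₜ[ℚ] ax i := by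
  simp [cop, ax]

/-- left inclusion -/
abbrev iL : A ι →ₐ[ℚ] (A ι ⊗[ℚ] A ι) := Algebra.TensorProduct.includeLeft
/-- right inclusion -/
abbrev iR : A ι →ₐ[ℚ] (A ι ⊗[ℚ] A ι) := Algebra.TensorProduct.includeRight

lemma iL_iR_comm (f g : PowerSeries (A ι)) :
    Commute (PowerSeries.map ((iL : A ι →ₐ[ℚ] A ι ⊗[ℚ] A ι) : A ι →+* A ι ⊗[ℚ] A ι) f) (PowerSeries.map ((iR : A ι →ₐ[ℚ] A ι ⊗[ℚ] A ι) : A ι →+* A ι ⊗[ℚ] A ι) g) := by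
  ext n
  rw [PowerSeries.coeff_mul, PowerSeries.coeff_mul, ← Finset.Nat.sum_antidiagonal_swap]
  refine Finset.sum_congr rfl fun p _ => ?_
  simp

lemma cop_phi (g : FreeGroup ι) : PowerSeries.map ((cop : A ι →ₐ[ℚ] A ι ⊗[ℚ] A ι) : A ι →+* A ι ⊗[ℚ] A ι) (phi g) =
    PowerSeries.map ((iL : A ι →ₐ[ℚ] A ι ⊗[ℚ] A ι) : A ι →+* A ι ⊗[ℚ] A ι) (phi g) * PowerSeries.map ((iR : A ι →ₐ[ℚ] A ι ⊗[ℚ] A ι) : A ι →+* A ι ⊗[ℚ] A ι) (phi g) := by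
  have key (x : A ι) (hx : cop x = iL x + iR x) : PowerSeries.map ((cop : A ι →ₐ[ℚ] A ι ⊗[ℚ] A ι) : A ι →+* A ι ⊗[ℚ] A ι) (E x) =
      PowerSeries.map ((iL : A ι →ₐ[ℚ] A ι ⊗[ℚ] A ι) : A ι →+* A ι ⊗[ℚ] A ι) (E x) * PowerSeries.map ((iR : A ι →ₐ[ℚ] A ι ⊗[ℚ] A ι) : A ι →+* A ι ⊗[ℚ] A ι) (E x) := by
    rw [map_E, map_E, map_E, hx, E_add]
    simp [Commute, SemiconjBy]
  induction g using FreeGroup.induction_on with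
  | C1 => simp
  | of i => 
    rw [phi_of]; apply key; simp
  | inv_of i _ => 
    rw [phi_of_inv]; apply key
    rw [map_neg, map_neg, map_neg, cop_ax, neg_add]; rfl
  | mul x y hx hy => 
    rw [map_mul, map_mul, hx, hy, map_mul, map_mul]
    have := iL_iR_comm (phi y) (phi x)
    simp only [mul_assoc]
    congr 1
    rw [← mul_assoc, ← mul_assoc, this.eq]

/-- leading coefficients are primitive -/
lemma cop_lead (g : FreeGroup ι) (d : ℕ) (hd : 0 < d)
    (h : ∀ k, 0 < k → k < d → PowerSeries.coeff k (phi g) = 0) :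
    cop (PowerSeries.coeff d (phi g)) = PowerSeries.coeff d (phi g) ⊗ₜ[ℚ] (1 : A ι)
      + (1 : A ι) ⊗ₜ[ℚ] PowerSeries.coeff d (phi g) := by
  have := congrArg (PowerSeries.coeff d) (cop_phi g)
  rw [PowerSeries.coeff_mul] at this
  simp only [PowerSeries.coeff_map, RingHom.coe_coe] at this
  rw [this]
  rw [← Finset.sum_subset (s₁ := {(d, 0), (0, d)})]
  · rw [Finset.sum_pair (by simp; omega)]
    simp [phi_const]
  · intro p hp; simp at hp; rcases hp with rfl | rfl <;> simp
  · intro p hp hp2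
    rw [Finset.HasAntidiagonal.mem_antidiagonal] at hp
    have h0 : p.1 ≠ 0 := by
      rintro h1; apply hp2; simp; right; ext <;> simp <;> omega
    have h1 : p.2 ≠ 0 := by
      rintro h1; apply hp2; simp; left; ext <;> simp <;> omega
    rw [h p.1 (by omega) (by omega)]
    simp

end FourFree
end FourFree


noncomputable section FourFree
namespace FourFree
open PowerSeries MvPolynomial
open scoped TensorProduct

variable {ι : Type*}

lemma A_ind {p : A ι → Prop} (one : p 1) (add : ∀ f g, p f → p g → p (f + g))
    (smul : ∀ (r : ℚ) f, p f → p (r • f)) (mul : ∀ i f, p f → p (ax i * f)) (f : A ι) : p f := by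
  have hz : p 0 := by simpa using smul 0 1 one
  have hw (w : FreeMonoid ι) : p (MonoidAlgebra.of ℚ (FreeMonoid ι) w) := by
    induction w using FreeMonoid.inductionOn' with
    | one => rw [map_one]; exact one
    | of_mul i w ih => rw [map_mul]; exact mul i _ ih
  induction f using MonoidAlgebra.induction_linear with
  | zero => exact hz
  | add f g hf hg => exact add _ _ hf hg
  | single w r => 
    have := smul r _ (hw w)
    simpa using this

/-- differential polynomial ring -/
abbrev CC (ι : Type*) := MvPolynomial (FreeMonoid ι) ℚ

/-- basic derivations -/
def D (i : ι) : Derivation ℚ (CC ι) (CC ι) :=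
  MvPolynomial.mkDerivation ℚ (fun w => MvPolynomial.X (FreeMonoid.of i * w))

/-- action by differential operators -/
def rho : A ι →ₐ[ℚ] Module.End ℚ (CC ι) :=
  MonoidAlgebra.lift ℚ _ _ (FreeMonoid.lift fun i => ((D i : Derivation ℚ (CC ι) (CC ι)) : CC ι →ₗ[ℚ] CC ι))

/-- twisted action -/
def theta : A ι →ₐ[ℚ] Module.End ℚ (CC ι) :=
  MonoidAlgebra.lift ℚ _ _ (FreeMonoid.lift fun i => ((D i : Derivation ℚ (CC ι) (CC ι)) : CC ι →ₗ[ℚ] CC ι)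
    + LinearMap.mulLeft ℚ (MvPolynomial.X (FreeMonoid.of i)))

lemma rho_ax (i : ι) (c : CC ι) : rho (ax i) c = D i c := by
  simp [rho, ax]

lemma theta_ax (i : ι) (c : CC ι) : theta (ax i) c = D i c + MvPolynomial.X (FreeMonoid.of i) * c := by
  simp [theta, ax]

/-- total symbol -/
def B (f : A ι) : CC ι := theta f 1

/-- variation derivation -/
def del (c : CC ι) : Derivation ℚ (CC ι) (CC ι) :=
  MvPolynomial.mkDerivation ℚ (fun w => rho (MonoidAlgebra.of ℚ (FreeMonoid ι) w) c)

lemma D_del (i : ι) (c f : CC ι) : D i (del c f) = del c (D i f) := by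
  have : ⁅D i, del c⁆ = 0 := by
    apply MvPolynomial.derivation_ext
    intro w
    rw [Derivation.commutator_apply]
    simp only [D, del, MvPolynomial.mkDerivation_X, Derivation.coe_zero, Pi.zero_apply]
    rw [map_mul, map_mul, Module.End.mul_apply]
    change _ - rho (ax i) _ = 0
    rw [rho_ax]; simp [D]
  have h := congrArg (fun d => d f) this
  simp only [Derivation.commutator_apply, Derivation.coe_zero, Pi.zero_apply] at h
  exact sub_eq_zero.mp h

lemma B_ax_mul (i : ι) (f : A ι) : B (ax i * f) = D i (B f) + MvPolynomial.X (FreeMonoid.of i) * B f := by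
  rw [B, map_mul, Module.End.mul_apply, theta_ax]; rfl

lemma B_add (f g : A ι) : B (f + g) = B f + B g := by simp [B]
lemma B_smul (r : ℚ) (f : A ι) : B (r • f) = r • B f := by simp [B]
lemma B_one : B (1 : A ι) = 1 := by simp [B]

lemma theta_eq (f : A ι) (c : CC ι) : theta f c = c * B f + del c (B f) := by
  induction f using A_ind with
  | one => simp [B_one]
  | add f g hf hg => rw [map_add, LinearMap.add_apply, hf, hg, B_add, map_add]; ring
  | smul r f hf => 
    rw [map_smul, LinearMap.smul_apply, hf, B_smul, Derivation.map_smul, smul_add, mul_smul_comm]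
  | mul i f hf => 
    rw [map_mul, Module.End.mul_apply, hf, theta_ax, B_ax_mul]
    have : del c (MvPolynomial.X (FreeMonoid.of i)) = D i c := by
      rw [del, MvPolynomial.mkDerivation_X]; exact rho_ax i c
    simp only [map_add, Derivation.leibniz, smul_eq_mul, this, D_del]
    ring

lemma B_mul (f g : A ι) : B (f * g) = B g * B f + del (B g) (B f) := by
  rw [← theta_eq, B, map_mul, Module.End.mul_apply]; rfl

lemma deg_deriv {σ : Type*} (g : σ → MvPolynomial σ ℚ) (k : ℕ) (hg : ∀ w, (g w).totalDegree ≤ k)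
    (f : MvPolynomial σ ℚ) : (MvPolynomial.mkDerivation ℚ g f).totalDegree ≤ f.totalDegree - 1 + k := by
  conv_lhs => rw [f.as_sum, map_sum]
  refine (MvPolynomial.totalDegree_finsetSum _ _).trans ?_
  refine Finset.sup_le fun s hs => ?_
  rw [MvPolynomial.mkDerivation_monomial]
  refine (MvPolynomial.totalDegree_smul_le _ _).trans ?_
  refine (MvPolynomial.totalDegree_finsetSum _ _).trans ?_
  refine Finset.sup_le fun w hw => ?_
  change ((MvPolynomial.monomial (s - Finsupp.single w 1)) (s w : ℚ) * g w).totalDegree ≤ _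
  refine (MvPolynomial.totalDegree_mul _ _).trans ?_
  refine Nat.add_le_add ?_ (hg w)
  refine (MvPolynomial.totalDegree_monomial_le _ _).trans ?_
  have h1 := MvPolynomial.le_totalDegree hs
  have h2 : (s - Finsupp.single w 1) + Finsupp.single w 1 = s := by
    apply tsub_add_cancel_of_le
    rw [Finsupp.single_le_iff]
    have := Finsupp.mem_support_iff.mp hw
    omega
  have h3 : s.degree = (s - Finsupp.single w 1).degree + 1 := by
    conv_lhs => rw [← h2]
    simp
  have h4 : (s.sum fun _ e => e) = s.degree := rfl
  have h5 : ((s - Finsupp.single w 1).sum fun _ e => e) = (s - Finsupp.single w 1).degree := rfl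
  first
  | omega
  | (simp only [Function.id_def] at *; omega)

lemma deriv_of_deg_zero {σ : Type*} (d : Derivation ℚ (MvPolynomial σ ℚ) (MvPolynomial σ ℚ))
    (f : MvPolynomial σ ℚ) (h : f.totalDegree = 0) : d f = 0 := by
  rw [MvPolynomial.totalDegree_eq_zero_iff_eq_C] at h
  rw [h]; simp

lemma deg_D (i : ι) (f : CC ι) : (D i f).totalDegree ≤ f.totalDegree := by
  by_cases h : f.totalDegree = 0
  · rw [deriv_of_deg_zero _ _ h]; simp
  · have := deg_deriv (fun w : FreeMonoid ι => (MvPolynomial.X (FreeMonoid.of i * w) : CC ι)) 1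
      (fun w => by simp) f
    rw [D]; omega

lemma deg_rho (w : FreeMonoid ι) (c : CC ι) :
    (rho (MonoidAlgebra.of ℚ (FreeMonoid ι) w) c).totalDegree ≤ c.totalDegree := by
  induction w using FreeMonoid.inductionOn' with
  | one => simp [← MonoidAlgebra.one_def]
  | of_mul i w ih => 
    rw [map_mul, map_mul, Module.End.mul_apply]
    change (rho (ax i) _).totalDegree ≤ _
    rw [rho_ax]
    exact (deg_D i _).trans ih

lemma deg_B_mul (f g : A ι) (hf : B f ≠ 0) (hg : B g ≠ 0) :
    (B (f * g)).totalDegree = (B f).totalDegree + (B g).totalDegree := by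
  rw [B_mul]
  have hm := MvPolynomial.totalDegree_mul_of_isDomain hg hf
  by_cases h : (B f).totalDegree = 0
  · rw [deriv_of_deg_zero _ _ h, add_zero, hm, add_comm]
  · have := deg_deriv _ _ (fun w => deg_rho w (B g)) (B f)
    rw [MvPolynomial.totalDegree_add_eq_left_of_totalDegree_lt, hm, add_comm]
    rw [hm, del]; omega

/-- augmentation -/
def eps : A ι →ₐ[ℚ] ℚ := MonoidAlgebra.lift ℚ _ _ (FreeMonoid.lift fun _ => 0)

@[simp] lemma eps_ax (i : ι) : eps (ax i) = 0 := by simp [eps, ax]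

/-- first order truncation -/
def trun : CC ι →ₐ[ℚ] TrivSqZeroExt ℚ (A ι) :=
  MvPolynomial.aeval fun w => TrivSqZeroExt.inr (MonoidAlgebra.of ℚ (FreeMonoid ι) w)

lemma trun_D (i : ι) (h : CC ι) : trun (D i h) = TrivSqZeroExt.inr (ax i * (trun h).snd) := by
  induction h using MvPolynomial.induction_on with
  | C a => simp [← MvPolynomial.algebraMap_eq, TrivSqZeroExt.algebraMap_eq_inl]
  | add p q hp hq => simp [hp, hq, mul_add]
  | mul_X p w hp => 
    rw [Derivation.leibniz]
    simp only [smul_eq_mul, map_add, map_mul, hp]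
    simp only [D, MvPolynomial.mkDerivation_X, trun, MvPolynomial.aeval_X]
    ext
    · simp
    · simp [ax]

lemma trun_B (f : A ι) : trun (B f) = TrivSqZeroExt.inl (eps f) + TrivSqZeroExt.inr (f - eps f • 1) := by
  induction f using A_ind with
  | one => simp [B_one]
  | add f g hf hg => 
    rw [B_add, map_add, hf, hg]
    ext1 <;> simp [add_smul]; abel
  | smul r f hf => 
    rw [B_smul, map_smul, hf]
    ext1 <;> simp [smul_sub, smul_smul]
  | mul i f hf => 
    rw [B_ax_mul, map_add, trun_D, map_mul, hf]
    ext1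
    · simp [trun]
    · have := eps_ax i
      simp only [ax] at this
      simp only [trun, ax]
      simp [-MonoidAlgebra.of_apply, mul_sub, this]

lemma B_ne_zero {f : A ι} (hf : f ≠ 0) : B f ≠ 0 := by
  intro h
  have := trun_B f
  rw [h, map_zero] at this
  have h1 := congrArg TrivSqZeroExt.fst this
  have h2 := congrArg TrivSqZeroExt.snd this
  simp at h1 h2
  rw [← h1] at h2
  simp at h2
  exact hf h2.symm

lemma eq_of_deg_zero {f : A ι} (hf : (B f).totalDegree = 0) : f = eps f • 1 := by
  have := trun_B f
  rw [MvPolynomial.totalDegree_eq_zero_iff_eq_C] at hf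
  rw [hf, ← MvPolynomial.algebraMap_eq, AlgHom.commutes] at this
  have h2 := congrArg TrivSqZeroExt.snd this
  simp [TrivSqZeroExt.algebraMap_eq_inl] at h2
  exact (sub_eq_zero.mp h2.symm)

lemma euler_coeff {σ : Type*} (f : MvPolynomial σ ℚ) (s : σ →₀ ℕ) :
    MvPolynomial.coeff s (MvPolynomial.mkDerivation ℚ (MvPolynomial.X : σ → MvPolynomial σ ℚ) f)
      = (s.degree : ℚ) * MvPolynomial.coeff s f := by
  have key : ∀ (t : σ →₀ ℕ) (r : ℚ),
      MvPolynomial.mkDerivation ℚ (MvPolynomial.X : σ → MvPolynomial σ ℚ) (MvPolynomial.monomial t r)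
      = (t.degree : ℚ) • MvPolynomial.monomial t r := by
    intro t r
    rw [MvPolynomial.mkDerivation_monomial]
    have : (t.sum fun i k => (MvPolynomial.monomial (t - Finsupp.single i 1) (k : ℚ)) • (MvPolynomial.X i : MvPolynomial σ ℚ))
        = t.sum fun i k => (k : ℚ) • MvPolynomial.monomial t 1 := by
      refine Finset.sum_congr rfl fun w hw => ?_
      have h2 : (t - Finsupp.single w 1) + Finsupp.single w 1 = t := by
        apply tsub_add_cancel_of_le
        rw [Finsupp.single_le_iff]
        have := Finsupp.mem_support_iff.mp hw
        omega
      simp only [smul_eq_mul, MvPolynomial.X, MvPolynomial.monomial_mul, h2, MvPolynomial.smul_monomial]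
    rw [this]
    have h6 : (t.degree : ℚ) = ∑ i ∈ t.support, (t i : ℚ) := by
      have : t.degree = ∑ i ∈ t.support, t i := rfl
      rw [this]; push_cast; rfl
    rw [Finsupp.sum, ← Finset.sum_smul, h6, smul_comm, MvPolynomial.smul_monomial, smul_eq_mul, mul_one]
  classical
  induction f using MvPolynomial.induction_on' with
  | monomial t r => 
    rw [key, MvPolynomial.coeff_smul, MvPolynomial.coeff_monomial]
    split_ifs with h
    · subst h; simp
    · simp
  | add p q hp hq => simp [hp, hq, mul_add]

/-- helper functional on the tensor square -/
def LL : (A ι ⊗[ℚ] A ι) →ₗ[ℚ] CC ι :=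
  TensorProduct.lift (((LinearMap.mul ℚ (CC ι)).compl₁₂
    ((LinearMap.applyₗ (1 : CC ι)).comp (theta : A ι →ₐ[ℚ] _).toLinearMap)
    ((LinearMap.applyₗ (MvPolynomial.X 1 : CC ι)).comp (rho : A ι →ₐ[ℚ] _).toLinearMap)))

lemma LL_tmul (u v : A ι) : LL (u ⊗ₜ[ℚ] v) = theta u 1 * rho v (MvPolynomial.X 1) := by
  simp [LL]

lemma LL_cop (f : A ι) : LL (cop f) = theta f (MvPolynomial.X 1) := by
  induction f using A_ind with
  | one => rw [map_one, Algebra.TensorProduct.one_def, LL_tmul]; simp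
  | add f g hf hg => simp [hf, hg]
  | smul r f hf => simp [hf]
  | mul i f hf => 
    have key : ∀ z, LL (((ax i) ⊗ₜ[ℚ] (1 : A ι) + (1 : A ι) ⊗ₜ[ℚ] ax i) * z) = theta (ax i) (LL z) := by
      intro z
      induction z using TensorProduct.induction_on with
      | zero => simp
      | add x y hx hy => rw [mul_add, map_add, hx, hy, map_add, map_add]
      | tmul u v => 
        rw [add_mul, Algebra.TensorProduct.tmul_mul_tmul, Algebra.TensorProduct.tmul_mul_tmul, map_add, LL_tmul, LL_tmul, LL_tmul,
          one_mul, one_mul, map_mul theta, map_mul rho, Module.End.mul_apply, Module.End.mul_apply, theta_ax, theta_ax, rho_ax,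
          Derivation.leibniz]
        simp only [smul_eq_mul]; ring
    rw [map_mul, cop_ax, key, hf, map_mul, Module.End.mul_apply]

lemma rho_of_X (w : FreeMonoid ι) : rho (MonoidAlgebra.of ℚ (FreeMonoid ι) w) (MvPolynomial.X 1) = MvPolynomial.X w := by
  induction w using FreeMonoid.inductionOn' with
  | one => simp [← MonoidAlgebra.one_def]
  | of_mul i w ih => 
    rw [map_mul, map_mul, Module.End.mul_apply, ih]
    change (rho (ax i) _) = _
    rw [rho_ax]
    simp [D]

lemma rho_X_coeff (f : A ι) (s : FreeMonoid ι →₀ ℕ) (hs : 1 < s.degree) :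
    MvPolynomial.coeff s (rho f (MvPolynomial.X 1)) = 0 := by
  classical
  induction f using MonoidAlgebra.induction_linear with
  | zero => simp
  | add f g hf hg => simp [hf, hg]
  | single w r => 
    have : MonoidAlgebra.single w r = r • MonoidAlgebra.of ℚ (FreeMonoid ι) w := by simp
    rw [this, map_smul, LinearMap.smul_apply, rho_of_X, MvPolynomial.coeff_smul, MvPolynomial.coeff_X, if_neg]
    · simp
    · rintro rfl; simp at hs

/-- primitive elements have symbol of degree at most one -/
lemma deg_B_prim (f : A ι) (h : cop f = f ⊗ₜ[ℚ] (1 : A ι) + (1 : A ι) ⊗ₜ[ℚ] f) : (B f).totalDegree ≤ 1 := by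
  have h1 := LL_cop f
  rw [h, map_add, LL_tmul, LL_tmul, theta_eq f (MvPolynomial.X 1)] at h1
  simp only [map_one, Module.End.one_apply, one_mul] at h1
  have h2 : del (MvPolynomial.X 1) (B f) = rho f (MvPolynomial.X 1) := by
    have h1' : B f * MvPolynomial.X 1 + rho f (MvPolynomial.X 1) = MvPolynomial.X 1 * B f + del (MvPolynomial.X 1) (B f) := h1
    rw [mul_comm] at h1'
    exact (add_left_cancel h1').symm
  have h3 : del (MvPolynomial.X 1 : CC ι) = MvPolynomial.mkDerivation ℚ MvPolynomial.X := by
    rw [del]; congr 1; ext1 w; exact rho_of_X w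
  rw [h3] at h2
  refine Finset.sup_le fun s hs => ?_
  by_contra hlt
  have hlt' : 1 < s.degree := by
    have : (s.sum fun _ e => e) = s.degree := rfl
    omega
  have h4 := euler_coeff (B f) s
  rw [h2, rho_X_coeff f s hlt'] at h4
  have h5 := MvPolynomial.mem_support_iff.mp hs
  rcases mul_eq_zero.mp h4.symm with h6 | h6
  · have : s.degree = 0 := by exact_mod_cast h6
    omega
  · exact h5 h6

/-- key irreducibility -/
lemma irred (u m : A ι) (hm : m ≠ 0) (hem : eps m = 0) (hu : u ≠ 0)
    (h : cop (u * m) = (u * m) ⊗ₜ[ℚ] (1 : A ι) + (1 : A ι) ⊗ₜ[ℚ] (u * m)) :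
    u = eps u • 1 := by
  have h1 := deg_B_prim _ h
  rw [deg_B_mul u m (B_ne_zero hu) (B_ne_zero hm)] at h1
  have h2 : (B m).totalDegree ≠ 0 := by
    intro h0
    have := eq_of_deg_zero h0
    rw [hem, zero_smul] at this
    exact hm this
  exact eq_of_deg_zero (by omega)

end FourFree
end FourFree


noncomputable section FourFree
namespace FourFree
open PowerSeries MvPolynomial
open scoped TensorProduct

variable {ι : Type*}

lemma of_mul_inj {i j : ι} {v w : FreeMonoid ι} (h : FreeMonoid.of i * v = FreeMonoid.of j * w) :
    i = j ∧ v = w := by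
  have := congrArg FreeMonoid.toList h
  simpa using this

lemma mul_of_inj {i j : ι} {v w : FreeMonoid ι} (h : v * FreeMonoid.of i = w * FreeMonoid.of j) :
    i = j ∧ v = w := by
  have := congrArg FreeMonoid.toList h
  simp only [FreeMonoid.toList_mul, FreeMonoid.toList_of] at this
  rw [← List.concat_eq_append, ← List.concat_eq_append, List.concat_inj] at this
  exact ⟨this.2, FreeMonoid.toList.injective this.1⟩

/-- coefficient functional -/
def cf (w : FreeMonoid ι) : A ι →ₗ[ℚ] ℚ where
  toFun f := f.coeff w
  map_add' f g := by simp
  map_smul' r f := by simp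

lemma cf_ext {f g : A ι} (h : ∀ w, cf w f = cf w g) : f = g := by
  apply MonoidAlgebra.coeff_injective
  ext w
  exact h w

open Classical in
lemma cf_ax_mul (i j : ι) (f : A ι) (v : FreeMonoid ι) :
    cf (FreeMonoid.of j * v) (ax i * f) = if j = i then cf v f else 0 := by
  change (ax i * f).coeff _ = if j = i then f.coeff v else 0
  split_ifs with h
  · subst h
    rw [ax, MonoidAlgebra.of_apply, MonoidAlgebra.coeff_single_mul_eq_mul_coeff (m₂ := v), one_mul]
    intro a _
    exact ⟨fun h => (of_mul_inj h).2, fun h => by rw [h]⟩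
  · rw [ax, MonoidAlgebra.of_apply, MonoidAlgebra.coeff_single_mul_of_forall_mul_ne]
    intro a h2
    exact h (of_mul_inj h2).1.symm

lemma cf_ax_mul_one (i : ι) (f : A ι) : cf 1 (ax i * f) = 0 := by
  change (ax i * f).coeff _ = 0
  rw [ax, MonoidAlgebra.of_apply, MonoidAlgebra.coeff_single_mul_of_forall_mul_ne]
  intro a  ha
  have := congrArg FreeMonoid.length ha
  simp at this

open Classical in
lemma cf_mul_ax (i k : ι) (f : A ι) (v : FreeMonoid ι) :
    cf (v * FreeMonoid.of k) (f * ax i) = if i = k then cf v f else 0 := by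
  change (f * ax i).coeff _ = if i = k then f.coeff v else 0
  split_ifs with h
  · subst h
    rw [ax, MonoidAlgebra.of_apply, MonoidAlgebra.coeff_mul_single_eq_coeff_mul (m₂ := v), mul_one]
    intro a _
    exact ⟨fun h => (mul_of_inj h).2, fun h => by rw [h]⟩
  · rw [ax, MonoidAlgebra.of_apply, MonoidAlgebra.coeff_mul_single_of_forall_mul_ne]
    intro a h2
    exact h (mul_of_inj h2).1

lemma cf_one_one : cf (1 : FreeMonoid ι) (1 : A ι) = 1 := by
  change (1 : A ι).coeff 1 = 1
  simp [MonoidAlgebra.one_def]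

lemma cf_of_one (i : ι) : cf (FreeMonoid.of i) (1 : A ι) = 0 := by
  classical
  change (1 : A ι).coeff _ = 0
  rw [MonoidAlgebra.one_def, MonoidAlgebra.coeff_single, Finsupp.single_apply, if_neg]
  intro h
  have := congrArg FreeMonoid.length h
  simp at this

/-- diagonal coefficient -/
def cc (f : PowerSeries (A ι)) (v : List ι) : ℚ :=
  cf (FreeMonoid.ofList v) (PowerSeries.coeff v.length f)

open Classical in
lemma cc_step (i : ι) (r : ℚ) (g : PowerSeries (A ι)) (j : ι) (v : List ι)
    (hv : (j :: v).IsChain (· ≠ ·)) :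
    cc (E (r • ax i) * g) (j :: v) = cc g (j :: v) + if j = i then r * cc g v else 0 := by
  unfold cc
  rw [List.length_cons, PowerSeries.coeff_mul, Finset.Nat.sum_antidiagonal_succ, map_add, map_sum,
    Finset.sum_eq_single (0, v.length)]
  · congr 1
    · simp [coeff_E]
    · rw [FreeMonoid.ofList_cons]
      simp only [zero_add, coeff_E, pow_one, Nat.factorial_one, Nat.cast_one, inv_one, one_smul]
      rw [smul_mul_assoc, map_smul, cf_ax_mul]
      simp
  · rintro ⟨a, b⟩ h1 h2
    rw [Finset.HasAntidiagonal.mem_antidiagonal] at h1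
    obtain ⟨a, rfl⟩ : ∃ a', a = a' + 1 := by
      refine Nat.exists_eq_succ_of_ne_zero ?_
      rintro rfl
      apply h2
      simp at h1
      simp [h1]
    simp only [coeff_E]
    rw [smul_pow, smul_smul, smul_mul_assoc, map_smul, pow_succ' (ax i), pow_succ' (ax i), mul_assoc, mul_assoc,
      FreeMonoid.ofList_cons, cf_ax_mul]
    split_ifs with h
    · subst h
      cases v with
      | nil => rw [FreeMonoid.ofList_nil, cf_ax_mul_one, smul_zero]
      | cons k v =>
        rw [FreeMonoid.ofList_cons, cf_ax_mul, if_neg, smul_zero]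
        rw [List.isChain_cons_cons] at hv
        exact fun h => hv.1 h.symm
    · simp
  · intro h
    exfalso; apply h; simp

lemma cc_one_nil : cc (1 : PowerSeries (A ι)) [] = 1 := by
  simp [cc, cf_one_one]

lemma magnus_a (l : List (ι × ℚ)) : ∀ v : List ι, v.IsChain (· ≠ ·) → l.length < v.length →
    cc (l.map fun p => E (p.2 • ax p.1)).prod v = 0 := by
  induction l with
  | nil =>
    intro v hv h
    have : v.length ≠ 0 := by simp at h; cases v <;> simp_all
    simp [cc, PowerSeries.coeff_one, this]
  | cons p l ih =>
    intro v hv h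
    cases v with
    | nil => simp at h
    | cons j v =>
      rw [List.map_cons, List.prod_cons, cc_step _ _ _ _ _ hv]
      simp only [List.length_cons] at h
      rw [ih _ hv (by simp; omega), ih v hv.tail (by omega)]
      simp

lemma magnus_b (l : List (ι × ℚ)) (h0 : ∀ p ∈ l, p.2 ≠ 0)
    (hc : (l.map Prod.fst).IsChain (· ≠ ·)) :
    cc (l.map fun p => E (p.2 • ax p.1)).prod (l.map Prod.fst) ≠ 0 := by
  induction l with
  | nil => simp [cc_one_nil]
  | cons p l ih =>
    rw [List.map_cons] at hc
    rw [List.map_cons, List.map_cons, List.prod_cons, cc_step _ _ _ _ _ hc, magnus_a _ _ hc (by simp),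
      if_pos rfl, zero_add]
    exact mul_ne_zero (h0 p (by simp)) (ih (fun q hq => h0 q (by simp [hq])) hc.tail)

lemma E_pow {S : Type*} [Ring S] [Algebra ℚ S] (x : S) (n : ℕ) : E x ^ n = E ((n : ℚ) • x) := by
  induction n with
  | zero => simp [E_zero]
  | succ n ih =>
    rw [pow_succ, ih, ← E_add]
    · congr 1; push_cast; rw [add_smul, one_smul]
    · exact (Commute.refl x).smul_left _

lemma phi_zpow (i : ι) (n : ℤ) : phi (FreeGroup.of i ^ n) = E ((n : ℚ) • ax i) := by
  obtain ⟨n, rfl | rfl⟩ := n.eq_nat_or_neg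
  · rw [zpow_natCast, map_pow, phi_of, E_pow]; simp
  · rw [zpow_neg, zpow_natCast, ← inv_pow, map_pow, phi_of_inv, E_pow]; simp

lemma magnus (g : FreeGroup ι) (h : phi g = 1) : g = 1 := by
  classical
  obtain ⟨x, rfl⟩ := (freeGroupEquivCoprodI (ι := ι)).symm.surjective g
  obtain ⟨w, rfl⟩ := (Monoid.CoprodI.Word.equiv (M := fun _ : ι => FreeGroup Unit)).symm.surjective x
  change phi (freeGroupEquivCoprodI.symm w.prod) = 1 at h
  change freeGroupEquivCoprodI.symm w.prod = 1
  set l : List (ι × ℚ) := w.toList.map fun p => (p.1, (FreeGroup.freeGroupUnitEquivInt p.2 : ℚ)) with hl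
  have hprod : phi (freeGroupEquivCoprodI.symm w.prod) = (l.map fun p => E (p.2 • ax p.1)).prod := by
    rw [Monoid.CoprodI.Word.prod, map_list_prod, map_list_prod, hl]
    congr 1
    simp only [List.map_map]
    apply List.map_congr_left
    rintro ⟨i, m⟩ _
    simp only [Function.comp]
    rw [← phi_zpow]
    congr 1
    obtain ⟨n, rfl⟩ := FreeGroup.freeGroupUnitEquivInt.symm.surjective m
    rw [Equiv.apply_symm_apply]
    simp [FreeGroup.freeGroupUnitEquivInt]
  have h1 : l ≠ [] → False := by
    intro hne
    have hb := magnus_b l ?_ ?_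
    · rw [← hprod, h] at hb
      apply hb
      simp [cc, PowerSeries.coeff_one, hne]
    · intro p hp
      rw [hl, List.mem_map] at hp
      obtain ⟨q, hq, rfl⟩ := hp
      have := w.ne_one q hq
      intro h0
      apply this
      simp only [Int.cast_eq_zero] at h0
      apply FreeGroup.freeGroupUnitEquivInt.injective
      rw [h0]
      simp [FreeGroup.freeGroupUnitEquivInt]
    · rw [hl, List.map_map, List.isChain_map]
      exact w.chain_ne
  have h2 : w.toList = [] := by
    by_contra hne
    apply h1
    simpa [hl] using hne
  simp [Monoid.CoprodI.Word.prod, h2]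

end FourFree
end FourFree


noncomputable section FourFree
namespace FourFree
open PowerSeries MvPolynomial
open scoped TensorProduct

variable {ι : Type*}

section gen
variable {S : Type*} [Ring S]

lemma coeff_mul_lt {u m : PowerSeries S} {i j : ℕ} (hu : ∀ k < i, PowerSeries.coeff k u = 0)
    (hm : ∀ k < j, PowerSeries.coeff k m = 0) (n : ℕ) (hn : n < i + j) :
    PowerSeries.coeff n (u * m) = 0 := by
  rw [PowerSeries.coeff_mul]
  refine Finset.sum_eq_zero fun p hp => ?_
  rw [Finset.HasAntidiagonal.mem_antidiagonal] at hp
  by_cases h : p.1 < i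
  · rw [hu _ h, zero_mul]
  · rw [hm p.2 (by omega), mul_zero]

lemma coeff_mul_lead {u m : PowerSeries S} {i j : ℕ} (hu : ∀ k < i, PowerSeries.coeff k u = 0)
    (hm : ∀ k < j, PowerSeries.coeff k m = 0) :
    PowerSeries.coeff (i + j) (u * m) = PowerSeries.coeff i u * PowerSeries.coeff j m := by
  rw [PowerSeries.coeff_mul, Finset.sum_eq_single (i, j)]
  · intro p hp hne
    rw [Finset.HasAntidiagonal.mem_antidiagonal] at hp
    by_cases h : p.1 < i
    · rw [hu _ h, zero_mul]
    · have : p.2 < j := by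
        by_contra h2
        apply hne
        ext <;> simp <;> omega
      rw [hm p.2 this, mul_zero]
  · intro h; exfalso; apply h; simp

lemma exists_lead {u : PowerSeries S} (hu : u ≠ 0) : ∃ i, PowerSeries.coeff i u ≠ 0 ∧
    ∀ k < i, PowerSeries.coeff k u = 0 := by
  classical
  have : ∃ i, PowerSeries.coeff i u ≠ 0 := by
    by_contra! h
    apply hu
    ext n
    simp [h n]
  exact ⟨Nat.find this, Nat.find_spec this, fun k hk => by simpa using Nat.find_min this hk⟩
end gen

lemma lead (m : PowerSeries (A ι)) (hm : ∀ n, eps (PowerSeries.coeff n m) = 0) (μ : A ι)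
    (j : ℕ) (hμ : PowerSeries.coeff j m = μ) (hμ0 : μ ≠ 0) (hj : ∀ k < j, PowerSeries.coeff k m = 0)
    (g : FreeGroup ι) (hg : g ≠ 1) (u : PowerSeries (A ι)) (h : phi g - 1 = u * m) :
    ∃ d, 0 < d ∧ (∀ k < d, PowerSeries.coeff k (phi g - 1) = 0) ∧ PowerSeries.coeff d (phi g) ≠ 0 ∧
      scal μ = (2 : ℚ) ^ d • μ := by
  have hu : u ≠ 0 := by
    rintro rfl
    rw [zero_mul, sub_eq_zero] at h
    exact hg (magnus g h)
  obtain ⟨i, hi, hi2⟩ := exists_lead hu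
  have hz := coeff_mul_lead hi2 hj
  have hlow := coeff_mul_lt hi2 hj
  rw [← h] at hz hlow
  have hprod : PowerSeries.coeff i u * PowerSeries.coeff j m ≠ 0 := by
    rw [hμ]; exact mul_ne_zero hi hμ0
  have hd : 0 < i + j := by
    by_contra hd
    have : i + j = 0 := by omega
    rw [← hz, this, map_sub, phi_const] at hprod
    simp at hprod
  have hz' : PowerSeries.coeff (i + j) (phi g) = PowerSeries.coeff i u * μ := by
    rw [map_sub, PowerSeries.coeff_one, if_neg hd.ne', sub_zero, hμ] at hz
    exact hz
  refine ⟨i + j, hd, hlow, by rw [hz', ← hμ]; exact hprod, ?_⟩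
  have hl := cop_lead g (i + j) hd (by
    intro k h0 hk
    have := hlow k hk
    rwa [map_sub, PowerSeries.coeff_one, if_neg h0.ne', sub_zero] at this)
  rw [hz'] at hl
  have hir := irred (PowerSeries.coeff i u) μ hμ0 (hμ ▸ hm j) hi hl
  have hs := scal_phi g (i + j)
  rw [hz', hir] at hs
  have hr : eps (PowerSeries.coeff i u) ≠ 0 := by
    intro h0
    rw [h0, zero_smul] at hir
    exact hi hir
  rw [smul_mul_assoc, one_mul, map_smul, smul_comm] at hs
  exact smul_right_injective _ hr hs

lemma endgame (m : PowerSeries (A ι)) (hm : ∀ n, eps (PowerSeries.coeff n m) = 0)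
    (a b : FreeGroup ι) (ha : ∃ u, phi a - 1 = u * m) (hb : ∃ u, phi b - 1 = u * m)
    (hc : ∃ u, phi (a * b * a⁻¹ * b⁻¹) - 1 = u * m) : a * b = b * a := by
  by_contra hne
  have hc1 : (a * b * a⁻¹ * b⁻¹) ≠ 1 := by
    intro h; apply hne
    rw [mul_inv_eq_one, mul_inv_eq_iff_eq_mul] at h; exact h
  have ha1 : a ≠ 1 := by rintro rfl; simp at hne
  have hb1 : b ≠ 1 := by rintro rfl; simp at hne
  obtain ⟨ua, hua⟩ := ha
  obtain ⟨ub, hub⟩ := hb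
  obtain ⟨uc, huc⟩ := hc
  have hm0 : m ≠ 0 := by
    rintro rfl
    rw [mul_zero, sub_eq_zero] at hua
    exact ha1 (magnus a hua)
  obtain ⟨j, hj, hj2⟩ := exists_lead hm0
  obtain ⟨d, hd, hlow, -, hs⟩ := lead m hm _ j rfl hj hj2 a ha1 ua hua
  obtain ⟨d2, hd2, hlow2, -, hs2⟩ := lead m hm _ j rfl hj hj2 b hb1 ub hub
  obtain ⟨d3, hd3, hlow3, hl3, hs3⟩ := lead m hm _ j rfl hj hj2 _ hc1 uc huc
  have key (x y : ℕ) (h : (2 : ℚ) ^ x • PowerSeries.coeff j m = (2 : ℚ) ^ y • PowerSeries.coeff j m) : x = y := by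
    have := smul_left_injective ℚ hj h
    exact pow_right_injective₀ (by norm_num) (by norm_num) this
  obtain rfl := key d d2 (hs.symm.trans hs2)
  obtain rfl := key d d3 (hs.symm.trans hs3)
  have heq : (phi (a * b * a⁻¹ * b⁻¹) - 1) * phi (b * a) = (phi a - 1) * (phi b - 1) - (phi b - 1) * (phi a - 1) := by
    rw [sub_mul, ← map_mul, show (a * b * a⁻¹ * b⁻¹) * (b * a) = a * b by group, map_mul, map_mul]
    noncomm_ring
  have h1 := coeff_mul_lead (j := 0) (m := phi (b * a)) hlow3 (by simp)
  rw [heq, phi_const, mul_one, map_sub, coeff_mul_lt hlow hlow2 _ (by omega),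
    coeff_mul_lt hlow2 hlow _ (by omega), map_sub, PowerSeries.coeff_one, if_neg (by omega)] at h1
  apply hl3
  simpa using h1.symm

/-- linear part -/
def lin (g : FreeGroup ι) : ι → ℚ := fun i => cf (FreeMonoid.of i) (PowerSeries.coeff 1 (phi g))

lemma coeff_one_mul (g h : FreeGroup ι) : PowerSeries.coeff 1 (phi (g * h)) =
    PowerSeries.coeff 1 (phi g) + PowerSeries.coeff 1 (phi h) := by
  rw [map_mul, PowerSeries.coeff_mul, Finset.Nat.sum_antidiagonal_succ]
  simp only [Finset.Nat.antidiagonal_zero, Finset.sum_singleton]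
  rw [phi_const, phi_const, one_mul, mul_one, add_comm]

lemma lin_mul (g h : FreeGroup ι) : lin (g * h) = lin g + lin h := by
  ext i
  simp only [lin, coeff_one_mul, map_add, Pi.add_apply]

lemma lin_one : lin (1 : FreeGroup ι) = 0 := by
  ext i
  simp [lin, PowerSeries.coeff_one]

lemma lin_inv (g : FreeGroup ι) : lin g⁻¹ = - lin g := by
  have := lin_mul g⁻¹ g
  rw [inv_mul_cancel, lin_one] at this
  exact eq_neg_of_add_eq_zero_left this.symm

lemma lin_of [DecidableEq ι] (i : ι) : lin (FreeGroup.of i) = Pi.single i 1 := by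
  ext j
  have := cf_ax_mul i j 1 1
  rw [mul_one, mul_one] at this
  simp [lin, coeff_E, this, cf_one_one, Pi.single_apply]

lemma coeff_one_phi [Fintype ι] (g : FreeGroup ι) :
    PowerSeries.coeff 1 (phi g) = ∑ i, lin g i • ax i := by
  classical
  induction g using FreeGroup.induction_on with
  | C1 => simp [PowerSeries.coeff_one, lin_one]
  | of i => simp [coeff_E, lin_of, Pi.single_apply]
  | inv_of i _ => rw [lin_inv, lin_of, phi_of_inv]; simp [coeff_E, Pi.single_apply]
  | mul x y hx hy => rw [coeff_one_mul, lin_mul, hx, hy, ← Finset.sum_add_distrib]; simp [add_smul]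

lemma indep [Fintype ι] {J : Type*} [Fintype J] (g : J → FreeGroup ι)
    (hg : LinearIndependent ℚ fun j => lin (g j)) (f : J → PowerSeries (A ι))
    (hf : ∑ j, f j * (phi (g j) - 1) = 0) : ∀ j, f j = 0 := by
  classical
  have key : ∀ d j, PowerSeries.coeff d (f j) = 0 := by
    intro d
    induction d using Nat.strong_induction_on with
    | _ d ih =>
    have h1 := congrArg (PowerSeries.coeff (d + 1)) hf
    have h2 (j : J) : PowerSeries.coeff (d + 1) (f j * (phi (g j) - 1)) =
        PowerSeries.coeff d (f j) * ∑ i, lin (g j) i • ax i := by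
      rw [coeff_mul_lead (fun k hk => ih k hk j)]
      · rw [map_sub, PowerSeries.coeff_one, if_neg one_ne_zero, sub_zero, coeff_one_phi]
      · intro k hk
        obtain rfl : k = 0 := by omega
        rw [map_sub, phi_const]; simp
    rw [map_sum, map_zero, Finset.sum_congr rfl fun j _ => h2 j] at h1
    intro j
    refine cf_ext fun v => ?_
    rw [map_zero]
    refine Fintype.linearIndependent_iff.1 hg (fun j => cf v (PowerSeries.coeff d (f j))) ?_ j
    ext k
    have h3 := congrArg (cf (v * FreeMonoid.of k)) h1
    simpa [Finset.mul_sum, cf_mul_ax, mul_comm] using h3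
  intro j
  ext n
  simp [key]

lemma mem_span {s : Set (FreeGroup ι)} {g : FreeGroup ι} (hg : g ∈ Subgroup.closure s) :
    phi g - 1 ∈ Submodule.span (PowerSeries (A ι)) ((fun x => phi x - 1) '' s) := by
  induction hg using Subgroup.closure_induction with
  | mem x hx => exact Submodule.subset_span ⟨x, hx, rfl⟩
  | one => simp
  | mul x y _ _ hx hy =>
    rw [map_mul, show phi x * phi y - 1 = phi x • (phi y - 1) + (phi x - 1) by
      rw [smul_eq_mul]; noncomm_ring]
    exact Submodule.add_mem _ (Submodule.smul_mem _ _ hy) hx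
  | inv x _ hx =>
    rw [show phi x⁻¹ - 1 = - (phi x⁻¹ • (phi x - 1)) by
      rw [smul_eq_mul, mul_sub, ← map_mul]; simp]
    exact Submodule.neg_mem _ (Submodule.smul_mem _ _ hx)

lemma mem_pair {p q g : FreeGroup ι} (hg : g ∈ Subgroup.closure {p, q}) :
    ∃ α β, phi g - 1 = α * (phi p - 1) + β * (phi q - 1) := by
  have := mem_span hg
  rw [Set.image_pair, Submodule.mem_span_pair] at this
  obtain ⟨α, β, h⟩ := this
  exact ⟨α, β, h.symm⟩

/-- the submodule N -/
def NN {J : Type*} [Fintype J] (g : J → FreeGroup ι) : Submodule (PowerSeries (A ι)) (PowerSeries (A ι)) where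
  carrier := {x | ∃ e : J → PowerSeries (A ι), (∀ j, PowerSeries.coeff 0 (e j) = 0) ∧
    x = ∑ j, e j * (phi (g j) - 1)}
  zero_mem' := ⟨0, by simp, by simp⟩
  add_mem' := by
    rintro _ _ ⟨e, he, rfl⟩ ⟨e', he', rfl⟩
    refine ⟨e + e', ?_, ?_⟩
    · intro j; rw [Pi.add_apply, map_add, he, he', add_zero]
    · simp [add_mul, Finset.sum_add_distrib]
  smul_mem' := by
    rintro c _ ⟨e, he, rfl⟩
    refine ⟨fun j => c * e j, ?_, ?_⟩
    · intro j
      have := he j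
      rw [PowerSeries.coeff_zero_eq_constantCoeff] at this ⊢
      rw [map_mul, this, mul_zero]
    · simp [Finset.mul_sum, mul_assoc]

lemma NN_mul {J : Type*} [Fintype J] (g : J → FreeGroup ι) (hg : Subgroup.closure (Set.range g) = ⊤)
    (x y : FreeGroup ι) : (phi x - 1) * (phi y - 1) ∈ NN g := by
  have := mem_span (s := Set.range g) (g := y) (by rw [hg]; trivial)
  rw [← Set.range_comp, Submodule.mem_span_range_iff_exists_fun] at this
  obtain ⟨c, hc⟩ := this
  refine ⟨fun j => (phi x - 1) * c j, ?_, ?_⟩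
  · intro j
    have := phi_const x
    rw [PowerSeries.coeff_zero_eq_constantCoeff] at this ⊢
    rw [map_mul, map_sub, this]; simp
  · rw [← hc]; simp [Finset.mul_sum, mul_assoc]

lemma NN_lin [Fintype ι] {J : Type*} [Fintype J] (g : J → FreeGroup ι)
    (hg : Subgroup.closure (Set.range g) = ⊤) (x : FreeGroup ι) :
    phi x - 1 - ∑ i, lin x i • (phi (FreeGroup.of i) - 1) ∈ NN g := by
  classical
  have hmul (x y : FreeGroup ι) : (phi (x * y) - 1 - ∑ i, lin (x * y) i • (phi (FreeGroup.of i) - 1)) =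
     (phi x - 1) * (phi y - 1) + (phi x - 1 - ∑ i, lin x i • (phi (FreeGroup.of i) - 1)) +
      (phi y - 1 - ∑ i, lin y i • (phi (FreeGroup.of i) - 1)) := by
    rw [lin_mul, map_mul]
    simp only [Pi.add_apply, add_smul, Finset.sum_add_distrib]
    noncomm_ring
  have h1 : phi (1 : FreeGroup ι) - 1 - ∑ i, lin (1 : FreeGroup ι) i • (phi (FreeGroup.of i) - 1) = 0 := by
    simp [lin_one]
  induction x using FreeGroup.induction_on with
  | C1 => rw [h1]; exact Submodule.zero_mem _
  | of i => simp [lin_of, Pi.single_apply]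
  | inv_of i hi =>
    have := hmul (FreeGroup.of i)⁻¹ (FreeGroup.of i)
    rw [inv_mul_cancel, h1] at this
    have h2 : phi (FreeGroup.of i)⁻¹ - 1 - ∑ k, lin (FreeGroup.of i)⁻¹ k • (phi (FreeGroup.of k) - 1) =
      -((phi (FreeGroup.of i)⁻¹ - 1) * (phi (FreeGroup.of i) - 1) +
        (phi (FreeGroup.of i) - 1 - ∑ k, lin (FreeGroup.of i) k • (phi (FreeGroup.of k) - 1))) := by
      rw [eq_neg_iff_add_eq_zero, this]; abel
    exact h2 ▸ Submodule.neg_mem _ (Submodule.add_mem _ (NN_mul g hg _ _) hi)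
  | mul x y hx hy =>
    rw [hmul]
    exact Submodule.add_mem _ (Submodule.add_mem _ (NN_mul g hg _ _) hx) hy

lemma relation [Fintype ι] {J : Type*} [Fintype J] (g : J → FreeGroup ι)
    (hg : Subgroup.closure (Set.range g) = ⊤) (c : J → ℚ) (hc : ∑ j, c j • lin (g j) = 0) :
    ∃ e : J → PowerSeries (A ι), (∀ j, PowerSeries.coeff 0 (e j) = 0) ∧
      ∑ j, c j • (phi (g j) - 1) = ∑ j, e j * (phi (g j) - 1) := by
  have h : ∑ j, c j • (phi (g j) - 1 - ∑ i, lin (g j) i • (phi (FreeGroup.of i) - 1)) ∈ NN g :=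
    Submodule.sum_mem _ fun j _ => Submodule.smul_of_tower_mem _ _ (NN_lin g hg _)
  have h2 : ∑ j, c j • ∑ i, lin (g j) i • (phi (FreeGroup.of i) - 1) = 0 := by
    simp only [Finset.smul_sum, smul_smul]
    rw [Finset.sum_comm]
    refine Finset.sum_eq_zero fun i _ => ?_
    rw [← Finset.sum_smul]
    have := congrFun hc i
    simp only [Finset.sum_apply, Pi.smul_apply, smul_eq_mul, Pi.zero_apply] at this
    rw [this, zero_smul]
  rw [Finset.sum_congr rfl fun j _ => smul_sub (c j) (phi (g j) - 1) _, Finset.sum_sub_distrib, h2, sub_zero] at h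
  exact h

lemma lin_mem {s : Set (FreeGroup ι)} {g : FreeGroup ι} (hg : g ∈ Subgroup.closure s) :
    lin g ∈ Submodule.span ℚ (lin '' s) := by
  induction hg using Subgroup.closure_induction with
  | mem x hx => exact Submodule.subset_span ⟨x, hx, rfl⟩
  | one => rw [lin_one]; exact Submodule.zero_mem _
  | mul x y _ _ hx hy => rw [lin_mul]; exact Submodule.add_mem _ hx hy
  | inv x _ hx => rw [lin_inv]; exact Submodule.neg_mem _ hx

lemma lin_span [Finite ι] {s : Set (FreeGroup ι)} (hs : Subgroup.closure s = ⊤) :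
    Submodule.span ℚ (lin '' s) = ⊤ := by
  classical
  rw [eq_top_iff, ← (Pi.basisFun ℚ ι).span_eq, Submodule.span_le]
  rintro _ ⟨i, rfl⟩
  rw [Pi.basisFun_apply, ← lin_of]
  apply lin_mem
  rw [hs]; trivial

lemma eps_phi (g : FreeGroup ι) : PowerSeries.map ((eps : A ι →ₐ[ℚ] ℚ) : A ι →+* ℚ) (phi g) = 1 := by
  have h0 : E (0 : ℚ) = 1 := E_zero
  induction g using FreeGroup.induction_on with
  | C1 => simp
  | of i => rw [phi_of, map_E, eps_ax, h0]
  | inv_of i _ => rw [phi_of_inv, map_E, map_neg, eps_ax, neg_zero, h0]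
  | mul x y hx hy => rw [map_mul, map_mul, hx, hy, one_mul]

end FourFree
end FourFree


noncomputable section FourFree
namespace FourFree
open PowerSeries MvPolynomial
open scoped TensorProduct

variable {ι : Type*}

lemma core [Fintype ι] (hι : 3 ≤ Fintype.card ι) (p1 p2 q1 q2 : FreeGroup ι)
    (htop : Subgroup.closure {p1, p2, q1, q2} = ⊤) (c1 c2 c3 : ℚ)
    (hrel : lin q2 = c1 • lin p1 + c2 • lin p2 + c3 • lin q1) (a b : FreeGroup ι)
    (haP : a ∈ Subgroup.closure {p1, p2}) (haQ : a ∈ Subgroup.closure {q1, q2})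
    (hbP : b ∈ Subgroup.closure {p1, p2}) (hbQ : b ∈ Subgroup.closure {q1, q2}) :
    a * b = b * a := by
  have hind : LinearIndependent ℚ fun j => lin ((![p1, p2, q1] : Fin 3 → FreeGroup ι) j) := by
    apply linearIndependent_of_top_le_span_of_card_le_finrank
    · rw [← lin_span htop, Submodule.span_le]
      have e : Set.range (fun j => lin ((![p1, p2, q1] : Fin 3 → FreeGroup ι) j)) = {lin p1, lin p2, lin q1} := by
        ext x
        simp [Fin.exists_fin_succ, eq_comm]
      rw [e]
      have h1 : lin p1 ∈ Submodule.span ℚ {lin p1, lin p2, lin q1} := Submodule.subset_span (by simp)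
      have h2 : lin p2 ∈ Submodule.span ℚ {lin p1, lin p2, lin q1} := Submodule.subset_span (by simp)
      have h3 : lin q1 ∈ Submodule.span ℚ {lin p1, lin p2, lin q1} := Submodule.subset_span (by simp)
      rintro _ ⟨x, hx, rfl⟩
      simp only [Set.mem_insert_iff, Set.mem_singleton_iff] at hx
      rcases hx with rfl | rfl | rfl | rfl
      · exact h1
      · exact h2
      · exact h3
      · rw [SetLike.mem_coe, hrel]
        exact Submodule.add_mem _ (Submodule.add_mem _ (Submodule.smul_mem _ _ h1)
          (Submodule.smul_mem _ _ h2)) (Submodule.smul_mem _ _ h3)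
    · simpa using hι
  obtain ⟨e, he, hsum⟩ := relation (![p1, p2, q1, q2] : Fin 4 → FreeGroup ι) (by
      rw [← htop]; congr 1; ext x; simp [eq_comm]; tauto) ![-c1, -c2, -c3, 1] (by
      simp [Fin.sum_univ_four, hrel]; abel)
  simp only [Fin.sum_univ_four, Matrix.cons_val_zero, Matrix.cons_val_one, Matrix.cons_val] at hsum
  have hunit : PowerSeries.constantCoeff (1 - e 3) = ((1 : (A ι)ˣ) : A ι) := by
    have := he 3
    rw [PowerSeries.coeff_zero_eq_constantCoeff] at this
    simp [this]
  obtain ⟨w, hw⟩ : ∃ w : PowerSeries (A ι), w * (1 - e 3) = 1 :=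
    ⟨_, PowerSeries.invOfUnit_mul _ _ hunit⟩
  obtain ⟨k1, k2, k3, hk⟩ : ∃ k1 k2 k3 : PowerSeries (A ι), phi q2 - 1 =
      k1 * (phi p1 - 1) + k2 * (phi p2 - 1) + k3 * (phi q1 - 1) := by
    refine ⟨w * (e 0 + algebraMap ℚ _ c1), w * (e 1 + algebraMap ℚ _ c2), w * (e 2 + algebraMap ℚ _ c3), ?_⟩
    calc phi q2 - 1 = (w * (1 - e 3)) * (phi q2 - 1) := by rw [hw, one_mul]
      _ = w * ((phi q2 - 1) - e 3 * (phi q2 - 1)) := by rw [mul_assoc, sub_mul, one_mul]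
      _ = w * ((e 0 + algebraMap ℚ _ c1) * (phi p1 - 1) + (e 1 + algebraMap ℚ _ c2) * (phi p2 - 1)
          + (e 2 + algebraMap ℚ _ c3) * (phi q1 - 1)) := by
        congr 1
        simp only [neg_smul, one_smul] at hsum
        rw [add_mul (e 0), add_mul (e 1), add_mul (e 2), ← Algebra.smul_def, ← Algebra.smul_def,
          ← Algebra.smul_def, sub_eq_iff_eq_add]
        have : phi q2 - 1 = c1 • (phi p1 - 1) + c2 • (phi p2 - 1) + c3 • (phi q1 - 1)
          + (-(c1 • (phi p1 - 1)) + -(c2 • (phi p2 - 1)) + -(c3 • (phi q1 - 1)) + (phi q2 - 1)) := by abel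
        rw [hsum] at this
        refine this.trans ?_
        abel
      _ = _ := by rw [mul_add, mul_add, mul_assoc w, mul_assoc w, mul_assoc w]
  have key (x : FreeGroup ι) (hxP : x ∈ Subgroup.closure {p1, p2})
      (hxQ : x ∈ Subgroup.closure {q1, q2}) :
      ∃ u, phi x - 1 = u * (k1 * (phi p1 - 1) + k2 * (phi p2 - 1)) := by
    obtain ⟨α, β, h1⟩ := mem_pair hxP
    obtain ⟨γ, δ, h2⟩ := mem_pair hxQ
    have h3 := indep _ hind ![α - δ * k1, β - δ * k2, - γ - δ * k3] (by
      simp only [Fin.sum_univ_three, Matrix.cons_val_zero, Matrix.cons_val_one, Matrix.cons_val]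
      have : α * (phi p1 - 1) + β * (phi p2 - 1) - γ * (phi q1 - 1) -
        δ * (k1 * (phi p1 - 1) + k2 * (phi p2 - 1) + k3 * (phi q1 - 1)) = 0 := by
        rw [← hk, ← h1, h2]; abel
      rw [← this]
      simp only [sub_mul, neg_mul, mul_add, mul_assoc]
      abel)
    have ha := h3 0
    have hb := h3 1
    simp only [Matrix.cons_val_zero, Matrix.cons_val_one, sub_eq_zero] at ha hb
    exact ⟨δ, by rw [h1, ha, hb, mul_add, mul_assoc, mul_assoc]⟩
  refine endgame (k1 * (phi p1 - 1) + k2 * (phi p2 - 1)) ?_ a b (key a haP haQ) (key b hbP hbQ) (key _ ?_ ?_)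
  · intro n
    have : PowerSeries.map ((eps : A ι →ₐ[ℚ] ℚ) : A ι →+* ℚ) (k1 * (phi p1 - 1) + k2 * (phi p2 - 1)) = 0 := by
      simp [eps_phi]
    have h2 := congrArg (PowerSeries.coeff n) this
    rw [PowerSeries.coeff_map] at h2
    simpa using h2
  · exact mul_mem (mul_mem (mul_mem haP hbP) (inv_mem haP)) (inv_mem hbP)
  · exact mul_mem (mul_mem (mul_mem haQ hbQ) (inv_mem haQ)) (inv_mem hbQ)

lemma main_free [Finite ι] (hι : 3 ≤ Nat.card ι) (p1 p2 q1 q2 : FreeGroup ι)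
    (htop : Subgroup.closure {p1, p2, q1, q2} = ⊤) (a b : FreeGroup ι)
    (haP : a ∈ Subgroup.closure {p1, p2}) (haQ : a ∈ Subgroup.closure {q1, q2})
    (hbP : b ∈ Subgroup.closure {p1, p2}) (hbQ : b ∈ Subgroup.closure {q1, q2}) :
    a * b = b * a := by
  have := Fintype.ofFinite ι
  rw [Nat.card_eq_fintype_card] at hι
  by_cases hind : LinearIndependent ℚ fun j => lin ((![p1, p2, q1, q2] : Fin 4 → FreeGroup ι) j)
  · obtain ⟨α, β, h1⟩ := mem_pair haP
    obtain ⟨γ, δ, h2⟩ := mem_pair haQ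
    have h3 := indep _ hind ![α, β, - γ, -δ] (by
      simp only [Fin.sum_univ_four, Matrix.cons_val_zero, Matrix.cons_val_one, Matrix.cons_val]
      rw [← h1, h2]; noncomm_ring)
    have ha := h3 0
    have hb := h3 1
    simp only [Matrix.cons_val_zero, Matrix.cons_val_one] at ha hb
    rw [ha, hb, zero_mul, zero_mul, zero_add, sub_eq_zero] at h1
    rw [magnus a h1]; simp
  · rw [Fintype.not_linearIndependent_iff] at hind
    obtain ⟨c, hc, i, hi⟩ := hind
    simp only [Fin.sum_univ_four, Matrix.cons_val_zero, Matrix.cons_val_one, Matrix.cons_val] at hc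
    have solve (x y z w : ι → ℚ) (c1 c2 c3 c4 : ℚ) (h : c1 • x + c2 • y + c3 • z + c4 • w = 0) (h4 : c4 ≠ 0) :
        w = (-c1 / c4) • x + (-c2 / c4) • y + (-c3 / c4) • z := by
      ext t
      have := congrFun h t
      simp at this ⊢
      field_simp
      linarith
    have pc (x y : FreeGroup ι) : ({x, y} : Set (FreeGroup ι)) = {y, x} := Set.pair_comm x y
    fin_cases i
    · refine core hι q1 q2 p2 p1 (by rw [← htop]; congr 1; ext; simp; tauto) _ _ _
        (solve _ _ _ _ (c 2) (c 3) (c 1) (c 0) (by rw [← hc]; abel) hi) a b haQ (by rwa [pc]) hbQ (by rwa [pc])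
    · refine core hι q1 q2 p1 p2 (by rw [← htop]; congr 1; ext; simp; tauto) _ _ _
        (solve _ _ _ _ (c 2) (c 3) (c 0) (c 1) (by rw [← hc]; abel) hi) a b haQ haP hbQ hbP
    · refine core hι p1 p2 q2 q1 (by rw [← htop]; congr 1; ext; simp; tauto) _ _ _
        (solve _ _ _ _ (c 0) (c 1) (c 3) (c 2) (by rw [← hc]; abel) hi) a b haP (by rwa [pc]) hbP (by rwa [pc])
    · refine core hι p1 p2 q1 q2 htop _ _ _
        (solve _ _ _ _ (c 0) (c 1) (c 2) (c 3) (by rw [← hc]) hi) a b haP haQ hbP hbQ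

end FourFree
end FourFree


noncomputable section FourFree
namespace FourFree

variable {ι : Type*}

lemma finite_of_gen (s : Set (FreeGroup ι)) (hs : s.Finite) (htop : Subgroup.closure s = ⊤) : Finite ι := by
  classical
  have : Finite (lin '' s) := (hs.image lin).to_subtype
  refine LinearIndependent.finite_of_le_span_finite (R := ℚ) (fun i => (Pi.single i 1 : ι → ℚ))
    (Pi.linearIndependent_single_one ι ℚ) (lin '' s) ?_
  rintro _ ⟨i, rfl⟩
  simp only
  rw [← lin_of]
  apply lin_mem
  rw [htop]; trivial

section rk
variable {Γ : Type*} [Group Γ]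

lemma exists_of_rk {H : Subgroup Γ} {n : ℕ} (h : H.rk = (n : ℕ∞)) :
    ∃ S : Finset Γ, S.card = n ∧ Subgroup.closure (S : Set Γ) = H := by
  have hne : {n : ℕ∞ | ∃ S : Finset Γ, (S.card : ℕ∞) = n ∧ Subgroup.closure (S : Set Γ) = H}.Nonempty := by
    by_contra hne
    rw [Set.not_nonempty_iff_eq_empty] at hne
    rw [Subgroup.rk, hne, sInf_empty] at h
    exact absurd h.symm (ENat.natCast_ne_top n)
  obtain ⟨S, hS, hS2⟩ := csInf_mem hne
  refine ⟨S, ?_, hS2⟩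
  change _ = H.rk at hS
  rw [h] at hS
  exact_mod_cast hS

lemma rk_le {H : Subgroup Γ} (S : Finset Γ) (h : Subgroup.closure (S : Set Γ) = H) :
    H.rk ≤ (S.card : ℕ∞) := sInf_le ⟨S, rfl, h⟩

lemma rk_le_of_free [Finite ι] {H : Subgroup Γ} (e : FreeGroup ι ≃* H) : H.rk ≤ (Nat.card ι : ℕ∞) := by
  classical
  have := Fintype.ofFinite ι
  have h := rk_le (H := H) (Finset.univ.image fun i : ι => (e (FreeGroup.of i) : Γ)) (by
    have h1 : (H.subtype.comp e.toMonoidHom).range = H := by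
      rw [MonoidHom.range_comp]
      rw [MonoidHom.range_eq_top.2 e.surjective, ← MonoidHom.range_eq_map, Subgroup.range_subtype]
    rw [MonoidHom.range_eq_map, ← FreeGroup.closure_range_of, MonoidHom.map_closure] at h1
    refine Eq.trans ?_ h1
    congr 1
    ext x; simp)
  refine h.trans ?_
  rw [Nat.card_eq_fintype_card]
  exact_mod_cast Finset.card_image_le

lemma free_comm (h : ∀ x y : FreeGroup ι, x * y = y * x) : Subsingleton ι := by
  classical
  constructor
  intro i j
  by_contra hij
  have h1 := congrArg (FreeGroup.lift fun k : ι => if k = i then (Equiv.swap 0 1 : Equiv.Perm (Fin 3)) else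
    Equiv.swap 1 2) (h (FreeGroup.of i) (FreeGroup.of j))
  have hji : j ≠ i := Ne.symm hij
  simp only [map_mul, FreeGroup.lift_apply_of, if_true, if_neg hji] at h1
  revert h1
  decide

lemma noncomm (H : Subgroup Γ) (hfree : IsFreeGroup H) (h2 : H.rk = (2 : ℕ∞))
    (hc : ∀ x ∈ H, ∀ y ∈ H, x * y = y * x) : False := by
  have e := (IsFreeGroup.toFreeGroup H)
  have hs : Subsingleton (IsFreeGroup.Generators H) := by
    apply free_comm
    intro x y
    apply e.symm.injective
    rw [map_mul, map_mul]
    apply Subtype.ext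
    exact hc _ (e.symm x).2 _ (e.symm y).2
  have h3 := rk_le_of_free e.symm
  rw [h2] at h3
  have h4 : Nat.card (IsFreeGroup.Generators H) ≤ 1 := Finite.card_le_one_iff_subsingleton.2 hs
  have : 2 ≤ Nat.card (IsFreeGroup.Generators H) := by exact_mod_cast h3
  omega

lemma pair_of_rk {H : Subgroup Γ} (h : H.rk = (2 : ℕ∞)) : ∃ x y, H = Subgroup.closure {x, y} := by
  classical
  obtain ⟨S, hS, hS2⟩ := exists_of_rk (n := 2) h
  obtain ⟨x, y, -, rfl⟩ := Finset.card_eq_two.1 hS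
  exact ⟨x, y, by rw [← hS2]; simp⟩

lemma comm_of_rk {H : Subgroup Γ} (h : H.rk < (2 : ℕ∞)) : ∀ x ∈ H, ∀ y ∈ H, x * y = y * x := by
  obtain ⟨n, hn⟩ := ENat.ne_top_iff_exists.1 (ne_top_of_lt h)
  obtain ⟨S, hS, hS2⟩ := exists_of_rk hn.symm
  rw [← hn] at h
  have h1 : S.card ≤ 1 := by
    have : n < 2 := by exact_mod_cast h
    omega
  have hle : ∀ x ∈ S, ∀ y ∈ S, x * y = y * x := by
    intro x hx y hy
    rw [Finset.card_le_one.1 h1 x hx y hy]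
  have := Subgroup.isMulCommutative_closure (k := (S : Set Γ)) hle
  intro x hx y hy
  rw [← hS2] at hx hy
  have := mul_comm' (⟨x, hx⟩ : Subgroup.closure (S : Set Γ)) ⟨y, hy⟩
  exact congrArg Subtype.val this

end rk

end FourFree
end FourFree

/-- If `Γ` is `4`-free and `P`, `Q` are subgroups of rank exactly `2` whose intersection
contains a subgroup of rank `2`, then `⟨P ∪ Q⟩` has rank exactly `2`. -/
theorem stmt2 {Γ : Type*} [Group Γ] (hfree : IsKFree 4 Γ) (P Q : Subgroup Γ)
    (hP : P.rk = (2 : ℕ∞)) (hQ : Q.rk = (2 : ℕ∞))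
    (hInt : ∃ R : Subgroup Γ, R ≤ P ⊓ Q ∧ R.rk = (2 : ℕ∞)) :
    (P ⊔ Q).rk = (2 : ℕ∞) := by
  classical
  have hle24 : (2 : ℕ∞) ≤ ((4 : ℕ) : ℕ∞) := by exact_mod_cast (by norm_num : 2 ≤ 4)
  apply le_antisymm
  swap
  · by_contra! hlt
    have hc := FourFree.comm_of_rk hlt
    exact FourFree.noncomm P (hfree P (hP ▸ hle24)) hP
      fun x hx y hy => hc x (le_sup_left (a := P) (b := Q) hx) y (le_sup_left (a := P) (b := Q) hy)
  obtain ⟨R, hR, hR2⟩ := hInt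
  obtain ⟨p1, p2, hp⟩ := FourFree.pair_of_rk hP
  obtain ⟨q1, q2, hq⟩ := FourFree.pair_of_rk hQ
  have hcl : Subgroup.closure {p1, p2, q1, q2} = P ⊔ Q := by
    rw [hp, hq, ← Subgroup.closure_union]
    congr 1
    ext; simp; tauto
  have h4 : (P ⊔ Q).rk ≤ ((4 : ℕ) : ℕ∞) := by
    refine (FourFree.rk_le ({p1, p2, q1, q2} : Finset Γ) (by rw [← hcl]; simp)).trans ?_
    exact_mod_cast Finset.card_le_four
  have hF := hfree _ h4
  have e : ↥(P ⊔ Q) ≃* FreeGroup (IsFreeGroup.Generators ↥(P ⊔ Q)) := IsFreeGroup.toFreeGroup _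
  generalize IsFreeGroup.Generators ↥(P ⊔ Q) = ι at e
  let ψ : FreeGroup ι →* Γ := (P ⊔ Q).subtype.comp e.symm.toMonoidHom
  have hψ : Function.Injective ψ := (Subtype.val_injective).comp e.symm.injective
  have hψr : ψ.range = P ⊔ Q := by
    simp only [ψ]
    rw [MonoidHom.range_comp, MonoidHom.range_eq_top.2 e.symm.surjective, ← MonoidHom.range_eq_map,
      Subgroup.range_subtype]
  have lift (x : Γ) (hx : x ∈ ({p1, p2, q1, q2} : Set Γ)) : ∃ y, ψ y = x := by
    rw [← MonoidHom.mem_range, hψr, ← hcl]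
    exact Subgroup.subset_closure hx
  obtain ⟨p1, rfl⟩ := lift p1 (by simp)
  obtain ⟨p2, rfl⟩ := lift p2 (by simp)
  obtain ⟨q1, rfl⟩ := lift q1 (by simp)
  obtain ⟨q2, rfl⟩ := lift q2 (by simp)
  have htop : Subgroup.closure {p1, p2, q1, q2} = ⊤ := by
    apply Subgroup.map_injective hψ
    rw [MonoidHom.map_closure, ← MonoidHom.range_eq_map, hψr, ← hcl]
    simp [Set.image_insert_eq]
  have hfin : Finite ι := FourFree.finite_of_gen _ (by simp) htop
  by_cases hι : 3 ≤ Nat.card ι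
  · exfalso
    refine FourFree.noncomm R (hfree R (hR2 ▸ hle24)) hR2 ?_
    have pull (x : Γ) (hx : x ∈ R) : ∃ a, ψ a = x ∧ a ∈ Subgroup.closure {p1, p2} ∧
        a ∈ Subgroup.closure {q1, q2} := by
      obtain ⟨hxP, hxQ⟩ := hR hx
      change x ∈ P at hxP
      change x ∈ Q at hxQ
      rw [hp, ← Set.image_pair ψ, ← MonoidHom.map_closure] at hxP
      rw [hq, ← Set.image_pair ψ, ← MonoidHom.map_closure] at hxQ
      obtain ⟨a, ha, rfl⟩ := hxP
      obtain ⟨b, hb, hab⟩ := hxQ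
      obtain rfl := hψ hab
      exact ⟨b, rfl, ha, hb⟩
    intro x hx y hy
    obtain ⟨a, rfl, ha1, ha2⟩ := pull x hx
    obtain ⟨b, rfl, hb1, hb2⟩ := pull y hy
    rw [← map_mul, ← map_mul, FourFree.main_free hι p1 p2 q1 q2 htop a b ha1 ha2 hb1 hb2]
  · refine (FourFree.rk_le_of_free e.symm).trans ?_
    have : Nat.card ι ≤ 2 := by omega
    exact_mod_cast this
end

section
/- Let k > r ≥ 1 be integers. Let Δ be a k-free group, and suppose that Δ has a normal subgroup N whose local rank is exactly r. Then Δ has local rank at most r. -/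
/-- A group has local rank at most `r` if every finitely generated subgroup is contained in a
subgroup of rank at most `r`. -/
def LocalRankLe (G : Type*) [Group G] (r : ℕ) : Prop :=
  ∀ H : Subgroup G, H.FG → ∃ K : Subgroup G, H ≤ K ∧ K.rk ≤ (r : ℕ∞)

theorem Subgroup.rk_le_iff_aux {Γ : Type*} [Group Γ] (H : Subgroup Γ) (n : ℕ) :
    H.rk ≤ (n : ℕ∞) ↔ ∃ S : Finset Γ, S.card ≤ n ∧ Subgroup.closure (S : Set Γ) = H := by
  constructor
  · intro h
    unfold Subgroup.rk at h
    by_cases hne : {n : ℕ∞ | ∃ S : Finset Γ, (S.card : ℕ∞) = n ∧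
        Subgroup.closure (S : Set Γ) = H}.Nonempty
    · obtain ⟨S, hS, hc⟩ := csInf_mem hne
      rw [← hS] at h
      exact ⟨S, by exact_mod_cast h, hc⟩
    · rw [Set.not_nonempty_iff_eq_empty] at hne
      rw [hne] at h
      simp at h
  · rintro ⟨S, hS, hc⟩
    have h1 : H.rk ≤ (S.card : ℕ∞) := sInf_le ⟨S, rfl, hc⟩
    exact h1.trans (by exact_mod_cast hS)

/-- Free groups are residually finite. -/
theorem freeGroup_residually_finite {α : Type*} (w : FreeGroup α) (hw : w ≠ 1) :
    ∃ (A : Set (FreeGroup α)) (_ : Finite A) (φ : FreeGroup α →* Equiv.Perm A), φ w ≠ 1 := by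
  classical
  let A : Set (FreeGroup α) := {v | v ∈ (w.toWord.tails.map FreeGroup.mk)}
  have hA : Finite A := (List.finite_toSet (w.toWord.tails.map FreeGroup.mk)).to_subtype
  have hmem : ∀ l, l <:+ w.toWord → FreeGroup.mk l ∈ A := by
    intro l hl
    exact List.mem_map.2 ⟨l, by simpa using hl, rfl⟩
  have := Fintype.ofFinite A
  let e : ∀ x : α, {v : A // FreeGroup.of x * v ∈ A} ≃ {u : A // (FreeGroup.of x)⁻¹ * u ∈ A} :=
    fun x =>
    { toFun := fun v => ⟨⟨FreeGroup.of x * v.1, v.2⟩, by simp⟩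
      invFun := fun u => ⟨⟨(FreeGroup.of x)⁻¹ * u.1, u.2⟩, by simp⟩
      left_inv := by intro v; simp
      right_inv := by intro v; simp }
  let σ : α → Equiv.Perm A := fun x => (e x).extendSubtype
  have hσ : ∀ x (v : A) (h : FreeGroup.of x * (v : FreeGroup α) ∈ A),
      σ x v = ⟨FreeGroup.of x * (v : FreeGroup α), h⟩ := by
    intro x v h
    exact Equiv.extendSubtype_apply_of_mem (e x) v h
  let φ : FreeGroup α →* Equiv.Perm A := FreeGroup.lift σ
  have key : ∀ l (hl : l <:+ w.toWord),
      φ (FreeGroup.mk l) ⟨FreeGroup.mk [], hmem [] (List.nil_suffix)⟩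
        = ⟨FreeGroup.mk l, hmem l hl⟩ := by
    intro l
    induction l with
    | nil =>
      intro hl
      have : φ (FreeGroup.mk []) = 1 := map_one φ
      rw [this]; rfl
    | cons a l ih =>
      intro hl
      have hl' : l <:+ w.toWord := (List.suffix_cons a l).trans hl
      have h1 : (FreeGroup.mk (a :: l) : FreeGroup α) = FreeGroup.mk [a] * FreeGroup.mk l := by
        simp [FreeGroup.mul_mk]
      have hm := hmem _ hl
      have : φ (FreeGroup.mk (a :: l)) = φ (FreeGroup.mk [a]) * φ (FreeGroup.mk l) := by
        rw [h1, map_mul]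
      rw [this, Equiv.Perm.mul_apply, ih hl']
      obtain ⟨x, b⟩ := a
      cases b with
      | true =>
        have hx : φ (FreeGroup.mk [(x, true)]) = σ x := by
          change φ (FreeGroup.of x) = _
          simp [φ]
        have h2 : (FreeGroup.mk ((x, true) :: l) : FreeGroup α)
          = FreeGroup.of x * FreeGroup.mk l := h1
        rw [hx, hσ x _ (by simpa [← h2] using hm)]
        exact Subtype.ext h2.symm
      | false =>
        have hi : (FreeGroup.mk [(x, false)] : FreeGroup α) = (FreeGroup.of x)⁻¹ := rfl
        have hx : φ (FreeGroup.mk [(x, false)]) = (σ x)⁻¹ := by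
          rw [hi, map_inv]
          simp [φ]
        have h2 : FreeGroup.of x * (FreeGroup.mk ((x, false) :: l) : FreeGroup α)
          = FreeGroup.mk l := by rw [h1, hi]; group
        rw [hx, Equiv.Perm.inv_eq_iff_eq, hσ x _ (by rw [h2]; exact hmem _ hl')]
        exact Subtype.ext h2.symm
  refine ⟨A, hA, φ, fun h => hw ?_⟩
  have hk := key w.toWord List.suffix_rfl
  have hφ : φ (FreeGroup.mk w.toWord) = 1 := by rw [FreeGroup.mk_toWord, h]
  rw [hφ] at hk
  have h5 : FreeGroup.mk [] = FreeGroup.mk w.toWord := congrArg Subtype.val hk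
  rw [FreeGroup.mk_toWord] at h5
  exact h5.symm

theorem freeGroup_hopf {α : Type*} [Finite α] (f : FreeGroup α →* FreeGroup α)
    (hf : Function.Surjective f) : Function.Injective f := by
  rw [injective_iff_map_eq_one]
  intro w hw
  by_contra hne
  obtain ⟨A, hA, φ, hφ⟩ := freeGroup_residually_finite w hne
  have : Finite (FreeGroup α →* Equiv.Perm A) := Finite.of_equiv _ FreeGroup.lift
  have hinj : Function.Injective
      (fun ψ : FreeGroup α →* Equiv.Perm A => ψ.comp f) := by
    intro ψ₁ ψ₂ h
    exact (MonoidHom.cancel_right hf).1 h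
  obtain ⟨ψ, hψ⟩ := Finite.surjective_of_injective hinj φ
  apply hφ
  rw [← hψ]
  simp [hw]

theorem freeGroup_card_le {α β : Type*} [Finite α] (f : FreeGroup α →* FreeGroup β)
    (hf : Function.Surjective f) : Finite β ∧ Nat.card β ≤ Nat.card α := by
  have hinj : Function.Injective
      (fun ψ : FreeGroup β →* ℤˣ => ψ.comp f) := by
    intro ψ₁ ψ₂ h
    exact (MonoidHom.cancel_right hf).1 h
  have hinj2 : Function.Injective (fun g : β → ℤˣ =>
      FreeGroup.lift.symm ((FreeGroup.lift g).comp f)) :=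
    FreeGroup.lift.symm.injective.comp (hinj.comp FreeGroup.lift.injective)
  have hfin : Finite (β → ℤˣ) := Finite.of_injective _ hinj2
  have hβ : Finite β := by
    classical
    refine Finite.of_injective (fun b : β => (Pi.mulSingle b (-1) : β → ℤˣ)) ?_
    intro a b h
    by_contra hab
    have := congrFun h a
    simp [Pi.mulSingle_eq_of_ne hab] at this
  refine ⟨hβ, ?_⟩
  have hc := Nat.card_le_card_of_injective _ hinj2
  have := Fintype.ofFinite α
  have := Fintype.ofFinite β
  rw [Nat.card_fun, Nat.card_fun] at hc
  exact (Nat.pow_le_pow_iff_right (by simp [Nat.card_eq_fintype_card])).1 hc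

theorem freeGroup_comm_none {β : Type*} (w : FreeGroup β)
    (w' : FreeGroup β)
    (h : FreeGroup.of none * FreeGroup.map some w * (FreeGroup.of none)⁻¹
      = (FreeGroup.map some w' : FreeGroup (Option β))) : w = 1 := by
  classical
  have hww : w = w' := by
    let ρ : FreeGroup (Option β) →* FreeGroup β :=
      FreeGroup.lift (fun o => o.elim 1 FreeGroup.of)
    have hρ : ∀ v, ρ (FreeGroup.map some v) = v := by
      intro v
      have : ρ.comp (FreeGroup.map some) = MonoidHom.id _ := by
        ext b; simp [ρ]
      exact DFunLike.congr_fun this v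
    have h1 := congrArg ρ h
    rw [map_mul, map_mul, hρ, hρ] at h1
    simpa [ρ] using h1
  subst hww
  let P : FreeGroup β →* Equiv.Perm (Option (FreeGroup β)) :=
    { toFun := fun g => Equiv.optionCongr (Equiv.mulLeft g)
      map_one' := by ext x : 1; cases x <;> simp
      map_mul' := by intro a b; ext x : 1; cases x <;> simp [mul_assoc] }
  let Q : FreeGroup (Option β) →* Equiv.Perm (Option (FreeGroup β)) :=
    FreeGroup.lift (fun o => o.elim (Equiv.swap none (some 1)) (fun b => P (FreeGroup.of b)))
  have hQ : ∀ v, Q (FreeGroup.map some v) = P v := by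
    intro v
    have : Q.comp (FreeGroup.map some) = P := by
      ext b : 1; simp [Q]
    exact DFunLike.congr_fun this v
  have h2 : FreeGroup.of none * FreeGroup.map some w
      = FreeGroup.map some w * (FreeGroup.of none : FreeGroup (Option β)) :=
    mul_inv_eq_iff_eq_mul.1 h
  have h3 := congrArg Q h2
  rw [map_mul, map_mul, hQ] at h3
  have h4 := DFunLike.congr_fun h3 none
  simpa [Q, P] using h4.symm

/-- The key step. -/
theorem key_step {Δ : Type*} [Group Δ] (S : Finset Δ) (x e : Δ) (he : e ≠ 1)
    (heS : e ∈ Subgroup.closure (S : Set Δ))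
    (hxe : x * e * x⁻¹ ∈ Subgroup.closure (S : Set Δ))
    (H : Subgroup Δ) (hH : H = Subgroup.closure (insert x (S : Set Δ)))
    (hfree : IsFreeGroup H) :
    ∃ T : Finset Δ, T.card ≤ S.card ∧ Subgroup.closure (T : Set Δ) = H := by
  classical
  let g : FreeGroup (Option S) →* Δ := FreeGroup.lift (fun o => o.elim x (fun s => s.1))
  have hgr : g.range = H := by
    rw [hH, FreeGroup.range_lift_eq_closure]
    congr 1
    ext y
    simp [Option.exists, eq_comm]
  let g' : FreeGroup (Option S) →* H := g.codRestrict H (fun y => hgr ▸ ⟨y, rfl⟩)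
  have hg' : Function.Surjective g' := by
    rintro ⟨y, hy⟩
    rw [← hgr] at hy
    obtain ⟨z, rfl⟩ := hy
    exact ⟨z, rfl⟩
  let E := IsFreeGroup.toFreeGroup H
  let f : FreeGroup (Option S) →* FreeGroup (IsFreeGroup.Generators H) :=
    E.toMonoidHom.comp g'
  have hf : Function.Surjective f := E.surjective.comp hg'
  obtain ⟨hfin, hcard⟩ := freeGroup_card_le f hf
  have hcS : Nat.card (Option S) = S.card + 1 := by simp
  have := Fintype.ofFinite (IsFreeGroup.Generators H)
  rcases Nat.lt_or_ge S.card (Nat.card (IsFreeGroup.Generators H)) with hlt | hle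
  · exfalso
    have heq : Nat.card (Option S) = Nat.card (IsFreeGroup.Generators H) := by omega
    let ε : IsFreeGroup.Generators H ≃ Option S := ((Finite.card_eq.1 heq).some).symm
    let F : FreeGroup (Option S) →* FreeGroup (Option S) :=
      (FreeGroup.freeGroupCongr ε).toMonoidHom.comp f
    have hF : Function.Injective F :=
      freeGroup_hopf F ((FreeGroup.freeGroupCongr ε).surjective.comp hf)
    have hgi : Function.Injective g := by
      intro a b hab
      apply hF
      have : g' a = g' b := Subtype.ext hab
      simp [F, f, this]
    have hmap : ∀ y ∈ Subgroup.closure (S : Set Δ),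
        ∃ v : FreeGroup S, g (FreeGroup.map some v) = y := by
      intro y hy
      have : (FreeGroup.lift (fun s : S => s.1)).range = Subgroup.closure (S : Set Δ) := by
        rw [FreeGroup.range_lift_eq_closure]; simp
      rw [← this] at hy
      obtain ⟨v, rfl⟩ := hy
      refine ⟨v, ?_⟩
      have : g.comp (FreeGroup.map some) = FreeGroup.lift (fun s : S => s.1) := by
        ext s; simp [g]
      exact DFunLike.congr_fun this v
    obtain ⟨v, hv⟩ := hmap e heS
    obtain ⟨v', hv'⟩ := hmap _ hxe
    have : v = 1 := by
      apply freeGroup_comm_none v v'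
      apply hgi
      rw [hv', map_mul, map_mul, hv, map_inv]
      simp [g]
    apply he
    rw [← hv, this]; simp
  · let b : IsFreeGroup.Generators H → Δ := fun i => (E.symm (FreeGroup.of i) : H)
    refine ⟨Finset.univ.image b, ?_, ?_⟩
    · refine Finset.card_image_le.trans ?_
      rwa [Finset.card_univ, ← Nat.card_eq_fintype_card]
    · have h1 : FreeGroup.lift b = H.subtype.comp E.symm.toMonoidHom := by
        ext i; simp [b]
      have h2 : (FreeGroup.lift b).range = H := by
        rw [h1, MonoidHom.range_comp, MonoidHom.range_eq_top.2 E.symm.surjective,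
          ← MonoidHom.range_eq_map, Subgroup.range_subtype]
      rw [FreeGroup.range_lift_eq_closure] at h2
      simpa using h2

/-- If `k > r ≥ 1`, `Δ` is `k`-free, and `Δ` has a normal subgroup `N` whose local rank is
exactly `r`, then `Δ` has local rank at most `r`. -/
theorem stmt3 {Δ : Type*} [Group Δ] (k r : ℕ) (hr : 1 ≤ r) (hrk : r < k)
    (hfree : IsKFree k Δ) (N : Subgroup Δ) (hN : N.Normal)
    (hNle : LocalRankLe N r) (hNexact : ∀ s : ℕ, s < r → ¬ LocalRankLe N s) :
    LocalRankLe Δ r := by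
  classical
  obtain ⟨e, heN, he⟩ : ∃ e ∈ N, e ≠ 1 := by
    by_contra! hcon
    apply hNexact 0 hr
    intro H _
    refine ⟨⊥, ?_, ?_⟩
    · intro y _
      exact Subgroup.mem_bot.2 (Subtype.ext (hcon y y.2))
    · rw [Subgroup.rk_le_iff_aux]
      exact ⟨∅, by simp, by simp⟩
  have main : ∀ T F : Finset Δ, (F : Set Δ) ⊆ N →
      ∃ S : Finset Δ, S.card ≤ r ∧ (F : Set Δ) ⊆ Subgroup.closure (S : Set Δ) ∧
        (T : Set Δ) ⊆ Subgroup.closure (S : Set Δ) := by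
    intro T
    induction T using Finset.induction_on with
    | empty =>
      intro F hF
      obtain ⟨K, hK, hKr⟩ := hNle (Subgroup.closure (Subtype.val ⁻¹' (F : Set Δ)))
        ((Subgroup.fg_iff _).2 ⟨_, rfl,
          F.finite_toSet.preimage Subtype.val_injective.injOn⟩)
      obtain ⟨S, hS, rfl⟩ := (Subgroup.rk_le_iff_aux _ _).1 hKr
      refine ⟨S.image Subtype.val, Finset.card_image_le.trans hS, ?_, by simp⟩
      intro y hy
      have h1 : (⟨y, hF hy⟩ : N) ∈ Subgroup.closure (S : Set N) :=
        hK (Subgroup.subset_closure hy)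
      have h2 := Subgroup.mem_map_of_mem N.subtype h1
      rw [MonoidHom.map_closure] at h2
      simpa using h2
    | insert x T _ ih =>
      intro F hF
      obtain ⟨S, hS, hFS, hTS⟩ := ih (insert e (insert (x * e * x⁻¹) F)) (by
        intro y hy
        simp only [Finset.coe_insert, Set.mem_insert_iff] at hy
        rcases hy with rfl | rfl | hy
        · exact heN
        · exact hN.conj_mem e heN x
        · exact hF hy)
      have hfr := hfree (Subgroup.closure (insert x (S : Set Δ)))
        ((Subgroup.rk_le_iff_aux _ _).2 ⟨insert x S,
          (Finset.card_insert_le x S).trans (by omega), by simp⟩)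
      obtain ⟨S', hS', hc⟩ := key_step S x e he (hFS (by simp)) (hFS (by simp)) _ rfl hfr
      have hle : Subgroup.closure (S : Set Δ) ≤ Subgroup.closure (insert x (S : Set Δ)) :=
        Subgroup.closure_mono (Set.subset_insert _ _)
      refine ⟨S', hS'.trans hS, ?_, ?_⟩
      · rw [hc]
        intro y hy
        exact hle (hFS (by
          simp only [Finset.coe_insert, Set.mem_insert_iff]
          exact Or.inr (Or.inr hy)))
      · rw [hc]
        intro y hy
        simp only [Finset.coe_insert, Set.mem_insert_iff] at hy
        rcases hy with rfl | hy
        · exact Subgroup.subset_closure (Set.mem_insert _ _)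
        · exact hle (hTS hy)
  rintro H ⟨T, rfl⟩
  obtain ⟨S, hS, -, hT⟩ := main T ∅ (by simp)
  exact ⟨Subgroup.closure S, (Subgroup.closure_le _).2 hT,
    (Subgroup.rk_le_iff_aux _ _).2 ⟨S, hS, rfl⟩⟩
end

section
/- Let m be a positive integer and let H be a finitely generated group which is m-free and has rank at least m. Let S be a finite generating set for H and let T₀ ⊆ S be an independent subset with |T₀| ≤ m. Then there exists an independent set T with T₀ ⊆ T ⊆ S and |T| = m. -/
/-- A subset `S` of a group is independent if the subgroup it generates is free with basis
`S`, i.e. the canonical homomorphism from the free group on `S` is injective. -/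
def IsIndependent {G : Type*} [Group G] (S : Set G) : Prop :=
  Function.Injective (FreeGroup.lift ((↑) : S → G))

universe u in
/-- Free groups are residually finite. -/
theorem fg_resid {κ : Type u} (w : FreeGroup κ) (hw : w ≠ 1) :
    ∃ (X : Type u) (_ : Finite X) (ψ : FreeGroup κ →* Equiv.Perm X), ψ w ≠ 1 := by
  classical
  obtain ⟨L, rfl⟩ : ∃ L, FreeGroup.mk L = w := Quot.exists_rep w
  let A : Set (FreeGroup κ) := {x | ∃ L', L' <:+ L ∧ FreeGroup.mk L' = x}
  have hA : A.Finite := by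
    have : A = FreeGroup.mk '' {L' | L' ∈ L.tails} := by
      ext x; simp [A, List.mem_tails]
    rw [this]
    exact (List.finite_toSet L.tails).image _
  have : Finite A := hA
  have : Fintype A := Fintype.ofFinite A
  let p : κ → A → Prop := fun a x => FreeGroup.of a * x.1 ∈ A
  let q : κ → A → Prop := fun a x => (FreeGroup.of a)⁻¹ * x.1 ∈ A
  let e : ∀ a, {x // p a x} ≃ {x // q a x} := fun a =>
    { toFun := fun x => ⟨⟨FreeGroup.of a * x.1.1, x.2⟩, by simp [q]⟩
      invFun := fun x => ⟨⟨(FreeGroup.of a)⁻¹ * x.1.1, x.2⟩, by simp [p]⟩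
      left_inv := fun x => by simp
      right_inv := fun x => by simp }
  let σ : κ → Equiv.Perm A := fun a => (e a).extendSubtype
  have hσ : ∀ a (x : A) (h : FreeGroup.of a * x.1 ∈ A), σ a x = ⟨FreeGroup.of a * x.1, h⟩ := by
    intro a x h
    exact Equiv.extendSubtype_apply_of_mem (e a) x h
  have h1 : (1 : FreeGroup κ) ∈ A := ⟨[], List.nil_suffix, rfl⟩
  refine ⟨A, inferInstance, FreeGroup.lift σ, fun hc => ?_⟩
  have key : ∀ L' (h : L' <:+ L),
      FreeGroup.lift σ (FreeGroup.mk L') ⟨1, h1⟩ = ⟨FreeGroup.mk L', L', h, rfl⟩ := by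
    intro L'
    induction L' with
    | nil => intro h; rfl
    | cons c L' ih =>
      intro h
      have h' : L' <:+ L := (List.suffix_cons c L').trans h
      have ih' := ih h'
      obtain ⟨a, b⟩ := c
      have hm : FreeGroup.mk ((a, b) :: L') = FreeGroup.mk [(a, b)] * FreeGroup.mk L' := by
        simp [FreeGroup.mul_mk]
      have hmem : FreeGroup.mk ((a, b) :: L') ∈ A := ⟨_, h, rfl⟩
      simp only [hm, map_mul, Equiv.Perm.mul_apply, ih']
      cases b with
      | true =>
        have : FreeGroup.mk [(a, true)] = FreeGroup.of a := rfl
        simp only [hm, this, FreeGroup.lift_apply_of] at hmem ⊢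
        exact hσ a _ hmem
      | false =>
        have : FreeGroup.mk [(a, false)] = (FreeGroup.of a)⁻¹ := rfl
        simp only [hm, this, map_inv, FreeGroup.lift_apply_of] at hmem ⊢
        rw [Equiv.Perm.inv_eq_iff_eq, hσ a ⟨_, hmem⟩]
        · simp
        · have hL' : FreeGroup.mk L' ∈ A := ⟨L', h', rfl⟩
          rwa [mul_inv_cancel_left]
  have := key L List.suffix_rfl
  rw [hc] at this
  exact hw (congrArg Subtype.val this).symm

/-- Precomposition with a surjection is injective on tuples. -/
theorem fg_pre_inj {ι κ P : Type*} [Group P] (φ : FreeGroup ι →* FreeGroup κ)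
    (hφ : Function.Surjective φ) :
    Function.Injective (fun v : κ → P => fun i => FreeGroup.lift v (φ (FreeGroup.of i))) := by
  intro v v' h
  have h1 : (FreeGroup.lift v).comp φ = (FreeGroup.lift v').comp φ := by
    ext i
    exact congrFun h i
  have h2 : FreeGroup.lift v = FreeGroup.lift v' := (MonoidHom.cancel_right hφ).1 h1
  exact FreeGroup.lift.injective h2

theorem fg_hopf {ι κ : Type*} [Finite ι] [Finite κ] (hc : Nat.card ι = Nat.card κ)
    (φ : FreeGroup ι →* FreeGroup κ) (hφ : Function.Surjective φ) : Function.Injective φ := by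
  rw [injective_iff_map_eq_one]
  intro w hw
  by_contra hne
  obtain ⟨X, _, ψ, hψ⟩ := fg_resid w hne
  have hinj := fg_pre_inj (P := Equiv.Perm X) φ hφ
  have hbij := (Nat.bijective_iff_injective_and_card _).2
    ⟨hinj, by simp only [Nat.card_fun, hc]⟩
  obtain ⟨v, hv⟩ := hbij.2 (fun i => ψ (FreeGroup.of i))
  have : (FreeGroup.lift v).comp φ = ψ := by
    ext1 i
    exact congrFun hv i
  apply hψ
  rw [← this]
  simp [hw]

theorem fg_card_le {ι κ : Type*} [Finite ι] (φ : FreeGroup ι →* FreeGroup κ)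
    (hφ : Function.Surjective φ) : Finite κ ∧ Nat.card κ ≤ Nat.card ι := by
  classical
  have hinj := fg_pre_inj (P := Multiplicative (ZMod 2)) φ hφ
  have hf : Finite (κ → Multiplicative (ZMod 2)) := Finite.of_injective _ hinj
  have hκ : Finite κ := by
    refine Finite.of_injective (fun k : κ => (Pi.mulSingle k (Multiplicative.ofAdd 1) :
      κ → Multiplicative (ZMod 2))) ?_
    intro a b h
    by_contra hne
    have := congrFun h a
    simp [hne] at this
  refine ⟨hκ, ?_⟩
  have := Nat.card_le_card_of_injective _ hinj
  simp only [Nat.card_fun] at this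
  have h2 : Nat.card (Multiplicative (ZMod 2)) = 2 := by
    rw [Nat.card_congr Multiplicative.toAdd, Nat.card_zmod]
  rw [h2] at this
  exact (Nat.pow_le_pow_iff_right (by norm_num)).1 this

theorem closure_range_eq_range_lift {ι H : Type*} [Group H] (f : ι → H) :
    Subgroup.closure (Set.range f) = (FreeGroup.lift f).range :=
  FreeGroup.range_lift_eq_closure.symm

theorem fg_dichotomy {H : Type*} [Group H] (k : ℕ) (f : Fin (k + 1) → H)
    (hF : IsFreeGroup (Subgroup.closure (Set.range f))) :
    Function.Injective (FreeGroup.lift f) ∨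
      ∃ g : Fin k → H, Subgroup.closure (Set.range g) = Subgroup.closure (Set.range f) := by
  classical
  rw [closure_range_eq_range_lift f] at hF ⊢
  let K := (FreeGroup.lift f).range
  let ε : FreeGroup (IsFreeGroup.Generators K) ≃* K := IsFreeGroup.mulEquiv K
  let φ : FreeGroup (Fin (k + 1)) →* FreeGroup (IsFreeGroup.Generators K) :=
    ε.symm.toMonoidHom.comp (FreeGroup.lift f).rangeRestrict
  have hφ : Function.Surjective φ :=
    ε.symm.surjective.comp (FreeGroup.lift f).rangeRestrict_surjective
  obtain ⟨hfin, hcard⟩ := fg_card_le φ hφ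
  rw [Nat.card_fin] at hcard
  rcases hcard.eq_or_lt with h | h
  · left
    have hi := fg_hopf (by rw [h, Nat.card_fin]) φ hφ
    intro x y hxy
    apply hi
    have : (FreeGroup.lift f).rangeRestrict x = (FreeGroup.lift f).rangeRestrict y :=
      Subtype.ext hxy
    simp [φ, this]
  · right
    let n := Nat.card (IsFreeGroup.Generators K)
    let e : Fin n ≃ IsFreeGroup.Generators K := (Finite.equivFin _).symm
    refine ⟨fun i => if hi : i.1 < n then (ε (FreeGroup.of (e ⟨i.1, hi⟩)) : H) else 1, ?_⟩
    apply le_antisymm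
    · rw [Subgroup.closure_le]
      rintro _ ⟨i, rfl⟩
      dsimp only
      split_ifs with hi
      · exact (ε _).2
      · exact one_mem _
    · intro x hx
      obtain ⟨y, hy⟩ := ε.surjective ⟨x, hx⟩
      have : ∀ y, (ε y : H) ∈ Subgroup.closure (Set.range (fun i : Fin k =>
          if hi : i.1 < n then (ε (FreeGroup.of (e ⟨i.1, hi⟩)) : H) else 1)) := by
        intro y
        induction y using FreeGroup.induction_on with
        | C1 => simp
        | of a =>
          apply Subgroup.subset_closure
          have hlt : (e.symm a).1 < n := (e.symm a).2
          refine ⟨⟨(e.symm a).1, by omega⟩, ?_⟩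
          simp [hlt]
        | inv_of a ih => simpa using ih
        | mul a b ha hb => simpa using mul_mem ha hb
      have h2 := this y
      rwa [hy] at h2

theorem rk_closure_range_le {H : Type*} [Group H] {n : ℕ} (f : Fin n → H) :
    (Subgroup.closure (Set.range f)).rk ≤ n := by
  classical
  have h : (Subgroup.closure (Set.range f)).rk ≤ ((Finset.univ.image f).card : ℕ∞) := by
    unfold Subgroup.rk
    exact sInf_le ⟨Finset.univ.image f, rfl, by simp⟩
  refine h.trans ?_
  exact_mod_cast Finset.card_image_le.trans (by simp)

theorem indep_of_lift_inj {ι H : Type*} [Group H] (f : ι → H)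
    (hf : Function.Injective (FreeGroup.lift f)) : IsIndependent (Set.range f) := by
  have hfi : Function.Injective f := by
    intro a b h
    apply FreeGroup.of_injective
    apply hf
    simpa using h
  let e := Equiv.ofInjective f hfi
  have : FreeGroup.lift ((↑) : Set.range f → H) =
      (FreeGroup.lift f).comp (FreeGroup.freeGroupCongr e.symm).toMonoidHom := by
    ext ⟨_, a, rfl⟩
    simp [e, Equiv.ofInjective_symm_apply]
  unfold IsIndependent
  rw [this]
  exact hf.comp (FreeGroup.freeGroupCongr e.symm).injective

/-- A `k`-element generating family of a group freely generated by `k` elements is free. -/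
theorem lift_inj_of_same_closure {H : Type*} [Group H] {k : ℕ} {T : Finset H} (hT : T.card = k)
    (hTi : IsIndependent (T : Set H)) (f : Fin k → H)
    (hf : Subgroup.closure (Set.range f) = Subgroup.closure (T : Set H)) :
    Function.Injective (FreeGroup.lift f) := by
  let L : FreeGroup ↥(T : Set H) →* H := FreeGroup.lift ((↑) : ↥(T : Set H) → H)
  have hL : L.range = (FreeGroup.lift f).range := by
    rw [← closure_range_eq_range_lift f, hf, ← closure_range_eq_range_lift, Subtype.range_coe]
  let ε : FreeGroup (T : Set H) ≃* L.range := MonoidHom.ofInjective hTi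
  have hε : ∀ x, (ε x : H) = L x := fun x => rfl
  let φ : FreeGroup (Fin k) →* FreeGroup (T : Set H) :=
    ε.symm.toMonoidHom.comp ((FreeGroup.lift f).codRestrict L.range (fun x => by
      rw [hL]; exact ⟨x, rfl⟩))
  have hφ : ∀ x, L (φ x) = FreeGroup.lift f x := by
    intro x
    rw [← hε]
    simp [φ]
  have hs : Function.Surjective φ := by
    intro y
    have : L y ∈ (FreeGroup.lift f).range := hL ▸ ⟨y, rfl⟩
    obtain ⟨x, hx⟩ := this
    exact ⟨x, hTi (by rw [← hx]; exact hφ x)⟩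
  have hi := fg_hopf (by simp [hT]) φ hs
  intro x y hxy
  rw [← hφ, ← hφ] at hxy
  exact hi (hTi hxy)

theorem key_step_s4 {H : Type*} [Group H] {m k : ℕ} (hkm : k < m) (hfree : IsKFree m H)
    {T : Finset H} (hT : T.card = k) (hTi : IsIndependent (T : Set H)) (s : H)
    (f : Fin k → H) (hTf : (T : Set H) ⊆ Subgroup.closure (Set.range f))
    (hinj : Function.Injective (FreeGroup.lift (Fin.cons s f : Fin (k + 1) → H))) :
    IsIndependent (insert s (T : Set H)) := by
  classical
  let F : Fin (k + 1) → H := Fin.cons s f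
  let ρ : FreeGroup (Fin (k + 1)) →* H := FreeGroup.lift (Fin.cons 1 f : Fin (k + 1) → H)
  let j : FreeGroup (Fin k) →* FreeGroup (Fin (k + 1)) := FreeGroup.map Fin.succ
  have hjF : ∀ x, FreeGroup.lift F (j x) = FreeGroup.lift f x := by
    have : (FreeGroup.lift F).comp j = FreeGroup.lift f := by ext i; simp [j, F]
    exact fun x => DFunLike.congr_fun this x
  have hjρ : ∀ x, ρ (j x) = FreeGroup.lift f x := by
    have : ρ.comp j = FreeGroup.lift f := by ext i; simp [j, ρ]
    exact fun x => DFunLike.congr_fun this x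
  let t : Fin k → H := fun i => ((T.equivFinOfCardEq hT).symm i : H)
  have ht : Set.range t = (T : Set H) := by
    ext x
    constructor
    · rintro ⟨i, rfl⟩; exact ((T.equivFinOfCardEq hT).symm i).2
    · intro hx; exact ⟨T.equivFinOfCardEq hT ⟨x, hx⟩, by simp [t]⟩
  have hrange : Set.range (Fin.cons s t : Fin (k + 1) → H) = insert s (T : Set H) := by
    rw [Fin.range_cons, ht]
  rw [← hrange]
  apply indep_of_lift_inj
  have hF : IsFreeGroup (Subgroup.closure (Set.range (Fin.cons s t : Fin (k + 1) → H))) :=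
    hfree _ ((rk_closure_range_le _).trans (by exact_mod_cast hkm))
  rcases fg_dichotomy k _ hF with h | ⟨g, hg⟩
  · exact h
  exfalso
  -- lift `t` and `g` to the free group
  have hw : ∀ i, ∃ w, FreeGroup.lift f w = t i := by
    intro i
    have : t i ∈ Subgroup.closure (Set.range f) := hTf (ht ▸ ⟨i, rfl⟩)
    rw [closure_range_eq_range_lift] at this
    exact this
  choose w hw using hw
  let W : Fin (k + 1) → FreeGroup (Fin (k + 1)) := Fin.cons (FreeGroup.of 0) (fun i => j (w i))
  have hW : (FreeGroup.lift F) ∘ W = Fin.cons s t := by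
    funext i
    refine Fin.cases ?_ (fun i => ?_) i
    · simp [W, F]
    · simp [W, hjF, hw]
  have hρW : ρ ∘ W = Fin.cons 1 t := by
    funext i
    refine Fin.cases ?_ (fun i => ?_) i
    · simp [W, ρ]
    · simp [W, hjρ, hw]
  have hv : ∀ i, ∃ v, FreeGroup.lift F v = g i := by
    intro i
    have : g i ∈ Subgroup.closure (Set.range ((FreeGroup.lift F) ∘ W)) := by
      rw [hW, ← hg]; exact Subgroup.subset_closure ⟨i, rfl⟩
    rw [Set.range_comp, ← MonoidHom.map_closure] at this
    obtain ⟨v, -, hv⟩ := this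
    exact ⟨v, hv⟩
  choose v hv using hv
  have hvW : Subgroup.closure (Set.range v) = Subgroup.closure (Set.range W) := by
    apply Subgroup.map_injective hinj
    change Subgroup.map (FreeGroup.lift F) _ = Subgroup.map (FreeGroup.lift F) _
    rw [MonoidHom.map_closure, MonoidHom.map_closure, ← Set.range_comp, ← Set.range_comp, hW,
      ← hg]
    congr 2
    funext i
    exact hv i
  have hcl : Subgroup.closure (Set.range (ρ ∘ v)) = Subgroup.closure (T : Set H) := by
    rw [Set.range_comp, ← MonoidHom.map_closure, hvW, MonoidHom.map_closure, ← Set.range_comp,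
      hρW, Fin.range_cons, Subgroup.closure_insert_one, ht]
  have hi := lift_inj_of_same_closure hT hTi _ hcl
  have h0 : FreeGroup.of (0 : Fin (k + 1)) ∈ Subgroup.closure (Set.range v) := by
    rw [hvW]; exact Subgroup.subset_closure ⟨0, rfl⟩
  rw [closure_range_eq_range_lift] at h0
  obtain ⟨y, hy⟩ := h0
  have hcomp : FreeGroup.lift (ρ ∘ v) = ρ.comp (FreeGroup.lift v) := by ext i; simp
  have hy1 : y = 1 := by
    apply hi
    rw [hcomp]
    simp [hy, ρ]
  rw [hy1, map_one] at hy
  exact FreeGroup.of_ne_one _ hy.symm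

/-- Let `m` be a positive integer and `H` a finitely generated `m`-free group of rank at
least `m`. If `S` is a finite generating set for `H` and `T₀ ⊆ S` is independent with
`|T₀| ≤ m`, then there is an independent set `T` with `T₀ ⊆ T ⊆ S` and `|T| = m`. -/
theorem stmt4 {H : Type*} [Group H] (m : ℕ) (hm : 0 < m) (hfree : IsKFree m H)
    (hfg : Group.FG H) (hrank : (m : ℕ∞) ≤ (⊤ : Subgroup H).rk)
    (S T₀ : Finset H) (hgen : Subgroup.closure (S : Set H) = ⊤)
    (hT₀S : T₀ ⊆ S) (hT₀ : IsIndependent (T₀ : Set H)) (hT₀card : T₀.card ≤ m) :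
    ∃ T : Finset H, T₀ ⊆ T ∧ T ⊆ S ∧ T.card = m ∧ IsIndependent (T : Set H) := by
  classical
  let C : Finset (Finset H) := S.powerset.filter
    (fun T => T₀ ⊆ T ∧ T.card ≤ m ∧ IsIndependent (T : Set H))
  have hC : C.Nonempty := ⟨T₀, by simp [C, hT₀S, hT₀, hT₀card]⟩
  obtain ⟨T, hTC, hmax⟩ := C.exists_max_image Finset.card hC
  simp only [C, Finset.mem_filter, Finset.mem_powerset] at hTC hmax
  obtain ⟨hTS, h0T, hTm, hTi⟩ := hTC
  refine ⟨T, h0T, hTS, ?_, hTi⟩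
  by_contra hne
  have hlt : T.card < m := lt_of_le_of_ne hTm hne
  obtain ⟨k, hk⟩ : ∃ k, T.card = k := ⟨_, rfl⟩
  have hlt' : k < m := hk ▸ hlt
  have main : ∀ U : Finset H, U ⊆ S → ∃ f : Fin k → H,
      Subgroup.closure (Set.range f) = Subgroup.closure ((T : Set H) ∪ U) := by
    intro U
    induction U using Finset.induction_on with
    | empty =>
      intro _
      refine ⟨fun i => ((T.equivFinOfCardEq hk).symm i : H), ?_⟩
      congr 1
      ext x
      simp only [Finset.coe_empty, Set.union_empty]
      constructor
      · rintro ⟨i, rfl⟩; exact ((T.equivFinOfCardEq hk).symm i).2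
      · intro hx; exact ⟨T.equivFinOfCardEq hk ⟨x, hx⟩, by simp⟩
    | insert s U hs ih =>
      intro hU
      obtain ⟨f, hf⟩ := ih (fun x hx => hU (Finset.mem_insert_of_mem hx))
      have hsS : s ∈ S := hU (Finset.mem_insert_self _ _)
      have hcl : Subgroup.closure (Set.range (Fin.cons s f : Fin (k + 1) → H)) =
          Subgroup.closure ((T : Set H) ∪ (insert s U : Finset H)) := by
        rw [Fin.range_cons, Finset.coe_insert, Set.union_insert, Set.insert_eq, Set.insert_eq,
          Subgroup.closure_union, hf, ← Subgroup.closure_union]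
      by_cases hsT : s ∈ T
      · refine ⟨f, hf.trans ?_⟩
        rw [Finset.coe_insert, Set.union_insert, Set.insert_eq_of_mem (Set.mem_union_left _ hsT)]
      have hF : IsFreeGroup (Subgroup.closure (Set.range (Fin.cons s f : Fin (k + 1) → H))) :=
        hfree _ ((rk_closure_range_le _).trans (by exact_mod_cast hlt'))
      rcases fg_dichotomy k _ hF with h | ⟨g, hg⟩
      · exfalso
        have hind := key_step_s4 hlt' hfree hk hTi s f (by
          rw [hf]; exact fun x hx => Subgroup.subset_closure (Or.inl hx)) h
        rw [← Finset.coe_insert] at hind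
        have hc : (insert s T).card = T.card + 1 := Finset.card_insert_of_notMem hsT
        have := hmax (insert s T) ⟨Finset.insert_subset hsS hTS,
          h0T.trans (Finset.subset_insert _ _), by omega, hind⟩
        omega
      · exact ⟨g, hg.trans hcl⟩
  obtain ⟨f, hf⟩ := main S subset_rfl
  have htop : Subgroup.closure (Set.range f) = ⊤ := by
    rw [hf, Set.union_eq_self_of_subset_left (by exact_mod_cast hTS), hgen]
  have := hrank.trans (htop ▸ rk_closure_range_le f)
  have : m ≤ k := by exact_mod_cast this
  omega
end

section
/- Let w and R be real numbers with 0 < w < R. Set ε = e^{−w}·√(1 − cosh²w/cosh²R) and, for 0 ≤ r ≤ sinh R, L(r) = cosh R − √(sinh²R − r²). Let K ⊂ ℝ³ be the set of points (x, y, t) satisfying x² + y² + (t − cosh R)² ≤ sinh²R and x² + y² + t² ≤ e^{−2w} (every point of K has t > 0, since cosh R − sinh R = e^{−R} > 0). Then the Lebesgue integral of t^{−3} over K equals π( e^R·cosh R − cosh R/L(ε) − log L(ε) − R + (1/2)·log(e^{−2w} − ε²) + w ). -/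
open MeasureTheory

/-- `ε(R, w) = e^{−w}√(1 − cosh²w/cosh²R)`. -/
noncomputable def eps (R w : ℝ) : ℝ :=
  Real.exp (-w) * Real.sqrt (1 - Real.cosh w ^ 2 / Real.cosh R ^ 2)

/-- `L(R, r) = cosh R − √(sinh²R − r²)`. -/
noncomputable def Lfun (R r : ℝ) : ℝ := Real.cosh R - Real.sqrt (Real.sinh R ^ 2 - r ^ 2)

lemma aux_disc (a : ℝ) :
    (volume : Measure (ℝ × ℝ)).real {p : ℝ × ℝ | p.1 ^ 2 + p.2 ^ 2 ≤ a} = Real.pi * max a 0 := by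
  rcases lt_or_ge a 0 with ha | ha
  · have : {p : ℝ × ℝ | p.1 ^ 2 + p.2 ^ 2 ≤ a} = ∅ := by
      ext p
      simp only [Set.mem_ofPred_eq, Set.mem_empty_iff_false, iff_false, not_le]
      nlinarith [sq_nonneg p.1, sq_nonneg p.2]
    rw [this, max_eq_right ha.le]
    simp
  · have hs : MeasurableSet {p : ℝ × ℝ | p.1 ^ 2 + p.2 ^ 2 ≤ a} :=
      measurableSet_le (by fun_prop) (by fun_prop)
    have := Complex.volume_preserving_equiv_real_prod.measure_preimage hs.nullMeasurableSet
    have h2 : Complex.measurableEquivRealProd ⁻¹' {p : ℝ × ℝ | p.1 ^ 2 + p.2 ^ 2 ≤ a}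
        = Metric.closedBall (0 : ℂ) (Real.sqrt a) := by
      ext z
      simp only [Set.mem_preimage, Set.mem_ofPred_eq, Complex.measurableEquivRealProd_apply,
        Metric.mem_closedBall, dist_zero_right]
      rw [Real.le_sqrt (norm_nonneg _) ha, Complex.sq_norm, Complex.normSq_apply]
      ring_nf
    rw [h2, Complex.volume_closedBall] at this
    rw [Measure.real, ← this, max_eq_left ha, ENNReal.toReal_mul, ENNReal.toReal_pow,
      ENNReal.toReal_ofReal (Real.sqrt_nonneg _), Real.sq_sqrt ha]
    simp [mul_comm]

lemma aux_fubini (c b : ℝ) (hc : 0 < c) :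
    (∫ q in {q : ℝ × ℝ × ℝ |
        q.1 ^ 2 + q.2.1 ^ 2 + (q.2.2 - c) ^ 2 ≤ c ^ 2 - 1 ∧
        q.1 ^ 2 + q.2.1 ^ 2 + q.2.2 ^ 2 ≤ b}, (q.2.2 ^ 3)⁻¹) =
    ∫ t : ℝ, (t ^ 3)⁻¹ * (Real.pi * max (min (2 * c * t - 1 - t ^ 2) (b - t ^ 2)) 0) := by
  set K := {q : ℝ × ℝ × ℝ |
        q.1 ^ 2 + q.2.1 ^ 2 + (q.2.2 - c) ^ 2 ≤ c ^ 2 - 1 ∧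
        q.1 ^ 2 + q.2.1 ^ 2 + q.2.2 ^ 2 ≤ b} with hK
  have hclosed : IsClosed K := by
    have e1 : IsClosed {q : ℝ × ℝ × ℝ | q.1 ^ 2 + q.2.1 ^ 2 + (q.2.2 - c) ^ 2 ≤ c ^ 2 - 1} :=
      isClosed_le (by fun_prop) (by fun_prop)
    have e2 : IsClosed {q : ℝ × ℝ × ℝ | q.1 ^ 2 + q.2.1 ^ 2 + q.2.2 ^ 2 ≤ b} :=
      isClosed_le (by fun_prop) (by fun_prop)
    exact e1.inter e2
  have hcomp : IsCompact K := by
    refine (isCompact_Icc (a := ((-(b+1), -(b+1), -(b+1)) : ℝ × ℝ × ℝ))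
      (b := (b+1, b+1, b+1))).of_isClosed_subset hclosed ?_
    rintro ⟨x, y, t⟩ ⟨-, h⟩
    simp only at h
    have hx : |x| ≤ b + 1 := by
      nlinarith [sq_nonneg y, sq_nonneg t, sq_nonneg (|x| - 1), sq_abs x, abs_nonneg x]
    have hy : |y| ≤ b + 1 := by
      nlinarith [sq_nonneg x, sq_nonneg t, sq_nonneg (|y| - 1), sq_abs y, abs_nonneg y]
    have ht : |t| ≤ b + 1 := by
      nlinarith [sq_nonneg y, sq_nonneg x, sq_nonneg (|t| - 1), sq_abs t, abs_nonneg t]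
    rw [abs_le] at hx hy ht
    exact ⟨⟨hx.1, hy.1, ht.1⟩, ⟨hx.2, hy.2, ht.2⟩⟩
  have hcont : ContinuousOn (fun q : ℝ × ℝ × ℝ => (q.2.2 ^ 3)⁻¹) K := by
    apply ContinuousOn.inv₀ (by fun_prop)
    rintro ⟨x, y, t⟩ ⟨h, -⟩
    simp only at h ⊢
    apply pow_ne_zero
    rintro rfl
    nlinarith [sq_nonneg x, sq_nonneg y]
  have hint : IntegrableOn (fun q : ℝ × ℝ × ℝ => (q.2.2 ^ 3)⁻¹) K :=
    hcont.integrableOn_compact hcomp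
  have hint2 : Integrable (K.indicator (fun q : ℝ × ℝ × ℝ => (q.2.2 ^ 3)⁻¹)) :=
    (integrable_indicator_iff hclosed.measurableSet).2 hint
  have hmp := (volume_preserving_prodAssoc (α₁ := ℝ) (β₁ := ℝ) (γ₁ := ℝ))
  rw [← integral_indicator hclosed.measurableSet]
  rw [← hmp.integral_comp (MeasurableEquiv.measurableEmbedding _)]
  have hint3 := (hmp.integrable_comp_emb (MeasurableEquiv.measurableEmbedding _)).2 hint2
  rw [Measure.volume_eq_prod] at hint3 ⊢
  refine (integral_prod_symm _ hint3).trans ?_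
  congr 1
  ext t
  rw [← aux_disc]
  have hm : MeasurableSet {p : ℝ × ℝ | p.1 ^ 2 + p.2 ^ 2 ≤ min (2 * c * t - 1 - t ^ 2) (b - t ^ 2)} :=
      measurableSet_le (by fun_prop) (by fun_prop)
  rw [mul_comm, ← smul_eq_mul, ← setIntegral_const, ← integral_indicator hm]
  congr 1
  ext p
  have : (MeasurableEquiv.prodAssoc (p, t) ∈ K) ↔
    p ∈ {p : ℝ × ℝ | p.1 ^ 2 + p.2 ^ 2 ≤ min (2 * c * t - 1 - t ^ 2) (b - t ^ 2)} := by
    simp only [hK, Set.mem_ofPred_eq, MeasurableEquiv.prodAssoc, MeasurableEquiv.coe_mk,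
      Equiv.prodAssoc_apply, le_min_iff]
    constructor <;> rintro ⟨h, h'⟩ <;> constructor <;> nlinarith
  by_cases hp : p ∈ {p : ℝ × ℝ | p.1 ^ 2 + p.2 ^ 2 ≤ min (2 * c * t - 1 - t ^ 2) (b - t ^ 2)}
  · rw [Set.indicator_of_mem hp]
    exact Set.indicator_of_mem (this.2 hp) _
  · rw [Set.indicator_of_notMem hp]
    exact Set.indicator_of_notMem (fun h => hp (this.1 h)) _

lemma aux_int1 (c a b : ℝ) (ha : 0 < a) (hab : a ≤ b) :
    ∫ t in a..b, (t ^ 3)⁻¹ * (Real.pi * (2 * c * t - 1 - t ^ 2)) =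
    Real.pi * (2 * c * (a⁻¹ - b⁻¹) + (1 / 2) * ((b ^ 2)⁻¹ - (a ^ 2)⁻¹) - Real.log b + Real.log a) := by
  have hpos : ∀ t ∈ Set.uIcc a b, 0 < t := by
    intro t ht
    rw [Set.uIcc_of_le hab] at ht
    exact ha.trans_le ht.1
  rw [intervalIntegral.integral_eq_sub_of_hasDerivAt
    (f := fun t => Real.pi * (-(2 * c) * t⁻¹ + (1 / 2) * (t ^ 2)⁻¹ - Real.log t))]
  · ring
  · intro t ht
    have h0 := (hpos t ht).ne'
    have h := ((((hasDerivAt_inv h0).const_mul (-(2 * c))).add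
      (((hasDerivAt_pow 2 t).inv (pow_ne_zero 2 h0)).const_mul (1 / 2))).sub
      (Real.hasDerivAt_log h0)).const_mul Real.pi
    refine h.congr_deriv ?_
    field_simp
    ring
  · apply ContinuousOn.intervalIntegrable
    apply ContinuousOn.mul _ (by fun_prop)
    exact ContinuousOn.inv₀ (by fun_prop) (fun t ht => pow_ne_zero _ (hpos t ht).ne')

lemma aux_int2 (d a b : ℝ) (ha : 0 < a) (hab : a ≤ b) :
    ∫ t in a..b, (t ^ 3)⁻¹ * (Real.pi * (d - t ^ 2)) =
    Real.pi * ((d / 2) * ((a ^ 2)⁻¹ - (b ^ 2)⁻¹) - Real.log b + Real.log a) := by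
  have hpos : ∀ t ∈ Set.uIcc a b, 0 < t := by
    intro t ht
    rw [Set.uIcc_of_le hab] at ht
    exact ha.trans_le ht.1
  rw [intervalIntegral.integral_eq_sub_of_hasDerivAt
    (f := fun t => Real.pi * (-(d / 2) * (t ^ 2)⁻¹ - Real.log t))]
  · ring
  · intro t ht
    have h0 := (hpos t ht).ne'
    have h := ((((hasDerivAt_pow 2 t).inv (pow_ne_zero 2 h0)).const_mul (-(d / 2))).sub
      (Real.hasDerivAt_log h0)).const_mul Real.pi
    refine h.congr_deriv ?_
    field_simp
    ring
  · apply ContinuousOn.intervalIntegrable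
    apply ContinuousOn.mul _ (by fun_prop)
    exact ContinuousOn.inv₀ (by fun_prop) (fun t ht => pow_ne_zero _ (hpos t ht).ne')

/-- The one-variable integral, with `a = e^{-R}`, `b = e^{-w}` and `s` the crossover height. -/
lemma aux_one (c a s b : ℝ) (ha : 0 < a) (has : a ≤ s) (hsb : s ≤ b) (hb1 : b ≤ a⁻¹)
    (hc : 2 * c = a + a⁻¹) (hs : 2 * c * s = 1 + b ^ 2) :
    ∫ t : ℝ, (t ^ 3)⁻¹ * (Real.pi * max (min (2 * c * t - 1 - t ^ 2) (b ^ 2 - t ^ 2)) 0) =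
    Real.pi * (2 * c * (a⁻¹ - s⁻¹) + (1 / 2) * ((s ^ 2)⁻¹ - (a ^ 2)⁻¹) - Real.log s + Real.log a) +
    Real.pi * ((b ^ 2 / 2) * ((s ^ 2)⁻¹ - (b ^ 2)⁻¹) - Real.log b + Real.log s) := by
  have hai : a * a⁻¹ = 1 := mul_inv_cancel₀ ha.ne'
  have haip : 0 < a⁻¹ := inv_pos.2 ha
  have hc0 : 0 < c := by linarith
  have hfac : ∀ t : ℝ, 2 * c * t - 1 - t ^ 2 = (t - a) * (a⁻¹ - t) := by
    intro t
    rw [hc]; linear_combination hai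
  have hf1 : Set.EqOn (fun t : ℝ => (t ^ 3)⁻¹ * (Real.pi * max (min (2 * c * t - 1 - t ^ 2) (b ^ 2 - t ^ 2)) 0))
      (fun t => (t ^ 3)⁻¹ * (Real.pi * (2 * c * t - 1 - t ^ 2))) (Set.uIcc a s) := by
    intro t ht
    rw [Set.uIcc_of_le has] at ht
    obtain ⟨h1, h2⟩ := ht
    simp only
    rw [min_eq_left (by nlinarith), max_eq_left]
    rw [hfac]
    exact mul_nonneg (by linarith) (by linarith)
  have hf2 : Set.EqOn (fun t : ℝ => (t ^ 3)⁻¹ * (Real.pi * max (min (2 * c * t - 1 - t ^ 2) (b ^ 2 - t ^ 2)) 0))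
      (fun t => (t ^ 3)⁻¹ * (Real.pi * (b ^ 2 - t ^ 2))) (Set.uIcc s b) := by
    intro t ht
    rw [Set.uIcc_of_le hsb] at ht
    obtain ⟨h1, h2⟩ := ht
    simp only
    rw [min_eq_right (by nlinarith), max_eq_left]
    nlinarith
  have hsupp : ∀ t : ℝ, t ∉ Set.Ioc a b →
      (t ^ 3)⁻¹ * (Real.pi * max (min (2 * c * t - 1 - t ^ 2) (b ^ 2 - t ^ 2)) 0) = 0 := by
    intro t ht
    rw [max_eq_right, mul_zero, mul_zero]
    rw [Set.mem_Ioc, not_and_or, not_lt, not_le] at ht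
    rcases ht with h | h
    · refine (min_le_left _ _).trans ?_
      rw [hfac]
      exact mul_nonpos_of_nonpos_of_nonneg (by linarith) (by linarith)
    · refine (min_le_right _ _).trans ?_
      nlinarith
  rw [← setIntegral_eq_integral_of_forall_compl_eq_zero hsupp,
    ← intervalIntegral.integral_of_le (has.trans hsb)]
  have hco : ∀ x y : ℝ, 0 < x → x ≤ y → IntervalIntegrable (fun t : ℝ => (t ^ 3)⁻¹ * (Real.pi * max (min (2 * c * t - 1 - t ^ 2) (b ^ 2 - t ^ 2)) 0)) volume x y := by
    intro x y hx hxy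
    apply ContinuousOn.intervalIntegrable
    apply ContinuousOn.mul _ (by fun_prop)
    refine ContinuousOn.inv₀ (by fun_prop) (fun t ht => pow_ne_zero _ ?_)
    rw [Set.uIcc_of_le hxy] at ht
    exact (hx.trans_le ht.1).ne'
  rw [← intervalIntegral.integral_add_adjacent_intervals (hco a s ha has) (hco s b (ha.trans_le has) hsb),
    intervalIntegral.integral_congr hf1, intervalIntegral.integral_congr hf2,
    aux_int1 c a s ha has, aux_int2 _ s b (ha.trans_le has) hsb]

/-- Let `0 < w < R` and let `K ⊂ ℝ³` be the set of points `(x, y, t)` with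
`x² + y² + (t − cosh R)² ≤ sinh²R` and `x² + y² + t² ≤ e^{−2w}`. Then the Lebesgue
integral of `t⁻³` over `K` equals
`π(e^R cosh R − cosh R/L(ε) − log L(ε) − R + (1/2) log(e^{−2w} − ε²) + w)`. -/
theorem stmt16 (w R : ℝ) (h1 : 0 < w) (h2 : w < R) :
    (∫ q in {q : ℝ × ℝ × ℝ |
        q.1 ^ 2 + q.2.1 ^ 2 + (q.2.2 - Real.cosh R) ^ 2 ≤ Real.sinh R ^ 2 ∧
        q.1 ^ 2 + q.2.1 ^ 2 + q.2.2 ^ 2 ≤ Real.exp (-2 * w)}, (q.2.2 ^ 3)⁻¹) =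
      Real.pi * (Real.exp R * Real.cosh R - Real.cosh R / Lfun R (eps R w) -
        Real.log (Lfun R (eps R w)) - R +
        (1 / 2) * Real.log (Real.exp (-2 * w) - eps R w ^ 2) + w) := by
  obtain ⟨b, hb⟩ : ∃ b, b = Real.exp (-w) := ⟨_, rfl⟩
  obtain ⟨a, ha⟩ : ∃ a, a = Real.exp (-R) := ⟨_, rfl⟩
  obtain ⟨c, hcd⟩ : ∃ c, c = Real.cosh R := ⟨_, rfl⟩
  have ha0 : 0 < a := ha ▸ Real.exp_pos _
  have hb0 : 0 < b := hb ▸ Real.exp_pos _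
  have hc0 : 0 < c := hcd ▸ Real.cosh_pos _
  have hai : Real.exp R = a⁻¹ := by rw [ha, Real.exp_neg, inv_inv]
  have hbi : Real.exp w = b⁻¹ := by rw [hb, Real.exp_neg, inv_inv]
  have hab : a ≤ b := by rw [ha, hb]; exact Real.exp_le_exp.2 (by linarith)
  have hb1 : b < 1 := by rw [hb]; exact Real.exp_lt_one_iff.2 (by linarith)
  have hb2 : Real.exp (-2 * w) = b ^ 2 := by
    rw [hb, ← Real.exp_nat_mul]; congr 1; push_cast; ring
  have hla : Real.log a = -R := by rw [ha, Real.log_exp]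
  have hlb : Real.log b = -w := by rw [hb, Real.log_exp]
  have hc : 2 * c = a + a⁻¹ := by rw [hcd, Real.cosh_eq, hai, ← ha]; ring
  have hcw : Real.cosh w = (b + b⁻¹) / 2 := by rw [Real.cosh_eq, hbi, ← hb]; ring
  have hsh : Real.sinh R ^ 2 = c ^ 2 - 1 := by rw [Real.sinh_sq, hcd]
  have haa : a * a⁻¹ = 1 := mul_inv_cancel₀ ha0.ne'
  have h1a : 1 < a⁻¹ := by
    rw [← hai]; exact Real.one_lt_exp_iff.2 (by linarith)
  obtain ⟨s, hsd⟩ : ∃ s, s = (1 + b ^ 2) / (2 * c) := ⟨_, rfl⟩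
  have hs : 2 * c * s = 1 + b ^ 2 := by rw [hsd]; field_simp
  have hs0 : 0 < s := by rw [hsd]; positivity
  have has : a ≤ s := by
    have : 2 * c * a ≤ 2 * c * s := by
      rw [hs, hc]; nlinarith
    exact le_of_mul_le_mul_left this (by linarith)
  have hsb : s ≤ b := by
    have : 2 * c * s ≤ 2 * c * b := by
      rw [hs, hc]
      nlinarith [mul_nonneg (sub_nonneg.2 hab) (by linarith : 0 ≤ a⁻¹ - b)]
    exact le_of_mul_le_mul_left this (by linarith)
  have hsc : s ≤ c := by nlinarith
  have heps : eps R w ^ 2 = b ^ 2 - s ^ 2 := by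
    have hq : b ^ 2 * (Real.cosh w ^ 2 / c ^ 2) = s ^ 2 := by
      rw [hcw, hsd]; field_simp; try ring
    rw [eps, ← hb, ← hcd, mul_pow, Real.sq_sqrt, mul_sub, hq, mul_one]
    rw [sub_nonneg, div_le_one (by positivity)]
    rw [hcd]
    have := (Real.cosh_lt_cosh (x := w) (y := R)).2 (by rw [abs_of_pos h1, abs_of_pos (h1.trans h2)]; exact h2)
    exact pow_le_pow_left₀ (Real.cosh_pos _).le this.le 2
  have hL : Lfun R (eps R w) = s := by
    rw [Lfun, heps, hsh, ← hcd]
    have : c ^ 2 - 1 - (b ^ 2 - s ^ 2) = (c - s) ^ 2 := by linear_combination hs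
    rw [this, Real.sqrt_sq (by linarith)]
    ring
  rw [hL, heps, hsh, hb2, ← hcd, hai, aux_fubini c (b ^ 2) hc0,
    aux_one c a s b ha0 has hsb (by linarith) hc hs, hla, hlb]
  have e : b ^ 2 - (b ^ 2 - s ^ 2) = s ^ 2 := by ring
  rw [e, Real.log_pow]
  have k1 : (1 / 2) * (s ^ 2)⁻¹ + (b ^ 2 / 2) * (s ^ 2)⁻¹ = c / s := by
    field_simp; linear_combination -hs
  have k2 : (b ^ 2 / 2) * (b ^ 2)⁻¹ = 1 / 2 := by field_simp
  have k3 : (a ^ 2)⁻¹ = 2 * c * a⁻¹ - 1 := by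
    rw [hc]; field_simp; ring
  rw [k3]
  push_cast
  have k4 : c * s⁻¹ = c / s := rfl
  linear_combination Real.pi * k1 - Real.pi * k2 - 2 * Real.pi * k4
end
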